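/- arXiv:2301.11192 — 2 statements merged into one kernel-verified Lean document; each statement's English description precedes it below -/
import Mathlib

section
/- Let p ≥ 5 be a prime with p ≠ 11. If b₂₁((11p^2 − 5)/6) is odd, then for every integer k ≥ 0, b₂₁((11p^{4k} − 5)/6) is odd. -/
/-- `b21 n` is the number of 21-regular partitions of `n`,
i.e. partitions of `n` none of whose parts is divisible by 21. -/
def b21 (n : ℕ) : ℕ :=
  (Finset.univ.filter fun c : n.Partition => ∀ i ∈ c.parts, ¬ (21 ∣ i)).card


/-- the finite set of integer points with `c > 0` on `c² + κ d² = m`. -/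
noncomputable def ellPts (κ m : ℕ) : Finset (ℤ × ℤ) :=
  ((Finset.Icc (1:ℤ) m) ×ˢ (Finset.Icc (-(m:ℤ)) m)).filter
    (fun q => q.1 ^ 2 + κ * q.2 ^ 2 = m)

lemma mem_ellPts {κ m : ℕ} (hκ : 0 < κ) (c d : ℤ) :
    (c, d) ∈ ellPts κ m ↔ 0 < c ∧ c ^ 2 + κ * d ^ 2 = m := by
  unfold ellPts
  simp only [Finset.mem_filter, Finset.mem_product, Finset.mem_Icc]
  constructor
  · rintro ⟨⟨⟨h1, h2⟩, h3, h4⟩, h5⟩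
    exact ⟨by omega, h5⟩
  · rintro ⟨h1, h2⟩
    have hk : (1:ℤ) ≤ κ := by exact_mod_cast hκ
    have hd : d ^ 2 ≤ κ * d ^ 2 := by nlinarith [sq_nonneg d]
    have hc : c ≤ c ^ 2 := by nlinarith
    have hd0 := sq_nonneg d
    refine ⟨⟨⟨by omega, by nlinarith⟩, ?_, ?_⟩, h2⟩
    · rcases le_or_gt 0 d with h | h
      · nlinarith
      · nlinarith [sq_nonneg c]
    · rcases le_or_gt d 0 with h | h
      · nlinarith
      · nlinarith [sq_nonneg c]

lemma card_ellPts {κ m : ℕ} (hκ : 0 < κ) (hm : 0 < m) :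
    ((ellPts κ m).card : ZMod 2) = if IsSquare m then 1 else 0 := by
  classical
  have key : ∑ q ∈ (ellPts κ m).filter (fun q => q.2 ≠ 0), (1 : ZMod 2) = 0 := by
    refine Finset.sum_involution (fun q _ => (q.1, -q.2)) ?_ ?_ ?_ ?_
    · intros; decide
    · rintro ⟨c, d⟩ h _ h'
      simp only [Finset.mem_filter] at h
      simp only [Prod.mk.injEq] at h'
      apply h.2
      show d = 0
      omega
    · rintro ⟨c, d⟩ h
      simp only [Finset.mem_filter, mem_ellPts hκ] at h ⊢
      simpa using h
    · rintro ⟨c, d⟩ h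
      simp
  have hsplit : ((ellPts κ m).card : ZMod 2)
      = (((ellPts κ m).filter (fun q => q.2 = 0)).card : ZMod 2) := by
    rw [← Finset.card_filter_add_card_filter_not (s := ellPts κ m) (fun q => q.2 = 0)]
    push_cast
    have : (((ellPts κ m).filter (fun q => ¬ q.2 = 0)).card : ZMod 2) = 0 := by
      rw [← key]; simp
    rw [this, add_zero]
  rw [hsplit]
  split_ifs with hs
  · obtain ⟨r, hr⟩ := hs
    have hr0 : 0 < r := Nat.pos_of_ne_zero (by rintro rfl; simp at hr; omega)
    have : (ellPts κ m).filter (fun q => q.2 = 0) = {((r:ℤ), (0:ℤ))} := by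
      ext ⟨c, d⟩
      simp only [Finset.mem_filter, mem_ellPts hκ, Finset.mem_singleton, Prod.mk.injEq]
      constructor
      · rintro ⟨⟨h1, h2⟩, rfl⟩
        refine ⟨?_, rfl⟩
        rw [hr] at h2
        push_cast at h2
        nlinarith
      · rintro ⟨rfl, rfl⟩
        refine ⟨⟨by exact_mod_cast hr0, ?_⟩, rfl⟩
        rw [hr]; push_cast; ring
    rw [this]; simp
  · have : (ellPts κ m).filter (fun q => q.2 = 0) = ∅ := by
      ext ⟨c, d⟩
      simp only [Finset.mem_filter, mem_ellPts hκ, Finset.notMem_empty, iff_false]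
      rintro ⟨⟨h1, h2⟩, rfl⟩
      apply hs
      refine ⟨c.natAbs, ?_⟩
      zify
      rw [abs_mul_abs_self, ← h2]; ring
    rw [this]; simp

/-- Points on `x² + 2 w² = L` with `3 ∤ x`. -/
lemma count_two (L : ℕ) (hL : 3 ∣ L) (hodd : L % 2 = 1) (S : Finset (ℕ × ℕ))
    (hS : ∀ x w, (x, w) ∈ S ↔ (x ^ 2 + 2 * w ^ 2 = L ∧ ¬ 3 ∣ x)) :
    (S.card : ZMod 2) = (if IsSquare (L / 3) then 1 else 0)
      + (if 9 ∣ L ∧ IsSquare (L / 9) then 1 else 0) := by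
  classical
  obtain ⟨m, rfl⟩ := hL
  have hm0 : 0 < m := by omega
  have h1 : 3 * m / 3 = m := by omega
  rw [h1, ← card_ellPts (κ := 2) (by norm_num) hm0]
  rw [← Finset.card_filter_add_card_filter_not (s := ellPts 2 m) (fun q => (3:ℤ) ∣ q.1 + q.2)]
  have e1 : S.card = ((ellPts 2 m).filter (fun q => ¬ (3:ℤ) ∣ q.1 + q.2)).card := by
    symm
    refine Finset.card_bij (fun q _ => ((q.1 - 2 * q.2).natAbs, (q.1 + q.2).natAbs)) ?_ ?_ ?_
    · rintro ⟨c, d⟩ h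
      simp only [Finset.mem_filter, mem_ellPts (κ := 2) (by norm_num)] at h
      obtain ⟨⟨h1, h2⟩, h3⟩ := h
      rw [hS]
      refine ⟨?_, ?_⟩
      · zify
        rw [sq_abs, sq_abs]
        push_cast at h2
        linear_combination 3 * h2
      · simp only
        omega
    · rintro ⟨c, d⟩ h ⟨c', d'⟩ h' heq
      simp only [Finset.mem_filter, mem_ellPts (κ := 2) (by norm_num)] at h h'
      simp only [Prod.mk.injEq] at heq ⊢
      obtain ⟨⟨h1, h2⟩, h3⟩ := h
      obtain ⟨⟨h1', h2'⟩, h3'⟩ := h'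
      clear h2 h2'
      omega
    · rintro ⟨x, w⟩ h
      rw [hS] at h
      obtain ⟨h2, h3⟩ := h
      have hx2 : x % 2 = 1 := by
        have : (x ^ 2 + 2 * w ^ 2) % 2 = 1 := by rw [h2]; exact hodd
        rcases Nat.even_or_odd' x with ⟨t, rfl | rfl⟩
        · exfalso; ring_nf at this; omega
        · omega
      have hw3 : (3:ℤ) ∣ w - x ∨ (3:ℤ) ∣ w + x := by
        have : (3:ℤ) ∣ (w - x) * (w + x) := by
          refine ⟨(w:ℤ)^2 - m, ?_⟩
          zify at h2
          linear_combination -h2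
        exact (Int.prime_three.dvd_or_dvd this)
      zify at h2
      have hgen : ∀ c d : ℤ, c ≠ 0 → (c - 2 * d).natAbs = x → (c + d).natAbs = w →
          ¬ (3:ℤ) ∣ c + d → ∃ a, ∃ (ha : a ∈ (ellPts 2 m).filter (fun q => ¬ (3:ℤ) ∣ q.1 + q.2)),
            ((a.1 - 2 * a.2).natAbs, (a.1 + a.2).natAbs) = (x, w) := by
        intro c d hc hx hw h3
        have hn : c ^ 2 + 2 * d ^ 2 = m := by
          have hx' : ((x:ℤ)) ^ 2 = (c - 2 * d) ^ 2 := by rw [← hx]; simp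
          have hw' : ((w:ℤ)) ^ 2 = (c + d) ^ 2 := by rw [← hw]; simp
          rw [hx', hw'] at h2
          linarith
        rcases lt_or_gt_of_ne hc with h | h
        · refine ⟨(-c, -d), ?_, ?_⟩
          · simp only [Finset.mem_filter, mem_ellPts (κ := 2) (by norm_num)]
            refine ⟨⟨by omega, ?_⟩, by omega⟩
            push_cast; linarith
          · simp only [Prod.mk.injEq]; omega
        · refine ⟨(c, d), ?_, ?_⟩
          · simp only [Finset.mem_filter, mem_ellPts (κ := 2) (by norm_num)]
            refine ⟨⟨by omega, ?_⟩, by omega⟩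
            push_cast; linarith
          · simp only [Prod.mk.injEq]; omega
      rcases hw3 with ⟨t, ht⟩ | ⟨t, ht⟩
      · exact hgen (x + 2 * t) t (by omega) (by omega) (by omega) (by omega)
      · exact hgen (x - 2 * t) (-t) (by omega) (by omega) (by omega) (by omega)
  have e2 : (((ellPts 2 m).filter (fun q => (3:ℤ) ∣ q.1 + q.2)).card : ZMod 2)
      = (if 9 ∣ 3 * m ∧ IsSquare (3 * m / 9) then 1 else 0) := by
    by_cases h9 : 3 ∣ m
    · obtain ⟨n, rfl⟩ := h9
      have h9' : 3 * (3 * n) / 9 = n := by omega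
      have h9'' : 9 ∣ 3 * (3 * n) := ⟨n, by ring⟩
      rw [h9']
      simp only [h9'', true_and]
      rw [← card_ellPts (κ := 2) (by norm_num) (by omega : 0 < n)]
      congr 1
      refine Finset.card_bij (fun q _ => if 0 < q.1 - 2 * q.2 then
        ((q.1 - 2 * q.2) / 3, (q.1 + q.2) / 3) else (-((q.1 - 2 * q.2) / 3), -((q.1 + q.2) / 3)))
        ?_ ?_ ?_
      · rintro ⟨c, d⟩ h
        simp only [Finset.mem_filter, mem_ellPts (κ := 2) (by norm_num)] at h
        obtain ⟨⟨h1, h2⟩, t, ht⟩ := h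
        have hc : c = 3 * t - d := by omega
        subst hc
        have hne : t - d ≠ 0 := by
          intro h0
          have : t = d := by omega
          subst this
          push_cast at h2
          ring_nf at h2
          omega
        have a1 : (3 * t - d - 2 * d) / 3 = t - d := by omega
        have a2 : (3 * t - d + d) / 3 = t := by omega
        simp only [a1, a2]
        push_cast at h2
        split_ifs with hpos
        · rw [mem_ellPts (by norm_num)]
          refine ⟨by omega, ?_⟩
          push_cast; linarith
        · rw [mem_ellPts (by norm_num)]
          refine ⟨by omega, ?_⟩
          push_cast; linarith
      · rintro ⟨c, d⟩ h ⟨c', d'⟩ h' heq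
        simp only [Finset.mem_filter, mem_ellPts (κ := 2) (by norm_num)] at h h'
        obtain ⟨⟨h1, h2⟩, h3⟩ := h
        obtain ⟨⟨h1', h2'⟩, h3'⟩ := h'
        clear h2 h2'
        simp only at heq h3 h3'
        split_ifs at heq <;> simp only [Prod.mk.injEq] at heq ⊢ <;> omega
      · rintro ⟨u, v⟩ h
        rw [mem_ellPts (by norm_num)] at h
        obtain ⟨h1, h2⟩ := h
        push_cast at h2
        have hne : u + 2 * v ≠ 0 := by
          intro h0
          have : u = - 2 * v := by omega
          subst this
          ring_nf at h2
          omega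
        rcases lt_or_gt_of_ne hne with h | h
        · refine ⟨(-(u + 2 * v), -(v - u)), ?_, ?_⟩
          · simp only [Finset.mem_filter, mem_ellPts (κ := 2) (by norm_num)]
            refine ⟨⟨by omega, ?_⟩, by omega⟩
            push_cast; linarith
          · simp only
            rw [if_neg (by omega)]
            simp only [Prod.mk.injEq]; omega
        · refine ⟨((u + 2 * v), (v - u)), ?_, ?_⟩
          · simp only [Finset.mem_filter, mem_ellPts (κ := 2) (by norm_num)]
            refine ⟨⟨by omega, ?_⟩, by omega⟩
            push_cast; linarith
          · simp only
            rw [if_pos (by omega)]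
            simp only [Prod.mk.injEq]; omega
    · have : (ellPts 2 m).filter (fun q => (3:ℤ) ∣ q.1 + q.2) = ∅ := by
        ext ⟨c, d⟩
        simp only [Finset.mem_filter, mem_ellPts (κ := 2) (by norm_num), Finset.notMem_empty,
          iff_false]
        rintro ⟨⟨h1, h2⟩, t, ht⟩
        apply h9
        have hc : c = 3 * t - d := by omega
        subst hc
        zify
        refine ⟨3 * t^2 - 2 * t * d + d ^ 2, ?_⟩
        rw [← h2]; push_cast; ring
      rw [this]
      rw [if_neg (by omega)]
      simp
  rw [e1]
  push_cast
  rw [← e2]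
  have h2 := CharTwo.add_self_eq_zero
    (((ellPts 2 m).filter (fun q => (3:ℤ) ∣ q.1 + q.2)).card : ZMod 2)
  linear_combination -h2

lemma count_seven_a (M : ℕ) (hM : M % 4 = 1) (S : Finset (ℕ × ℕ))
    (hS : ∀ x y, (x, y) ∈ S ↔ x ^ 2 + 7 * y ^ 2 = 8 * M) :
    (S.card : ZMod 2) = if IsSquare M then 1 else 0 := by
  classical
  rw [← card_ellPts (κ := 7) (by norm_num) (by omega : 0 < M)]
  congr 1
  symm
  have hodd : ∀ c d : ℤ, c ^ 2 + 7 * d ^ 2 = M → (c + d) % 2 = 1 := by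
    intro c d h
    rcases Int.even_or_odd' c with ⟨s, rfl | rfl⟩ <;>
      rcases Int.even_or_odd' d with ⟨t, rfl | rfl⟩ <;> ring_nf at h <;> omega
  refine Finset.card_bij (fun q _ => ((q.1 - 7 * q.2).natAbs, (q.1 + q.2).natAbs)) ?_ ?_ ?_
  · rintro ⟨c, d⟩ h
    rw [mem_ellPts (by norm_num)] at h
    rw [hS]
    zify
    rw [sq_abs, sq_abs]
    have := h.2
    push_cast at this
    linear_combination 8 * this
  · rintro ⟨c, d⟩ h ⟨c', d'⟩ h' heq
    rw [mem_ellPts (by norm_num)] at h h'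
    simp only [Prod.mk.injEq] at heq ⊢
    have o1 := hodd c d (by exact_mod_cast h.2)
    have o2 := hodd c' d' (by exact_mod_cast h'.2)
    have p1 := h.1
    have p2 := h'.1
    clear h h'
    omega
  · rintro ⟨x, y⟩ h
    rw [hS] at h
    have hpar : x % 2 = 1 ∧ y % 2 = 1 := by
      rcases Nat.even_or_odd' x with ⟨s, rfl | rfl⟩ <;>
        rcases Nat.even_or_odd' y with ⟨t, rfl | rfl⟩
      · exfalso
        have h' : s ^ 2 + 7 * t ^ 2 = 2 * M := by nlinarith
        rcases Nat.even_or_odd' s with ⟨s', rfl | rfl⟩ <;>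
          rcases Nat.even_or_odd' t with ⟨t', rfl | rfl⟩
        · ring_nf at h'; omega
        · ring_nf at h'; omega
        · ring_nf at h'; omega
        · have e1 : (s' * (s'+1)) % 2 = 0 := Nat.even_iff.mp (Nat.even_mul_succ_self s')
          have e2 : (t' * (t'+1)) % 2 = 0 := Nat.even_iff.mp (Nat.even_mul_succ_self t')
          have : 4 * (s' * (s'+1)) + 28 * (t' * (t'+1)) + 8 = 2 * M := by linarith
          omega
      · exfalso; ring_nf at h; omega
      · exfalso; ring_nf at h; omega
      · omega
    obtain ⟨hx, hy⟩ := hpar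
    have hdvd : (8:ℤ) ∣ x - y ∨ (8:ℤ) ∣ x + y := by
      obtain ⟨a, ha⟩ : ∃ a : ℤ, (x:ℤ) - y = 2 * a := ⟨((x:ℤ) - y) / 2, by omega⟩
      obtain ⟨b, hb⟩ : ∃ b : ℤ, (x:ℤ) + y = 2 * b := ⟨((x:ℤ) + y) / 2, by omega⟩
      obtain ⟨t, ht⟩ : ∃ t : ℤ, (y:ℤ) = 2 * t + 1 := ⟨((y:ℤ)) / 2, by omega⟩
      obtain ⟨n, hn⟩ : ∃ n : ℤ, (M:ℤ) = 4 * n + 1 := ⟨((M:ℤ)) / 4, by omega⟩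
      have hab : a * b = 8 * (n - t ^ 2 - t) := by
        zify at h
        have : (2 * a) * (2 * b) = 8 * (M - (y:ℤ)^2) := by
          rw [← ha, ← hb]; linear_combination h
        rw [hn, ht] at this
        linarith
      have hpar : a % 2 = 1 ∨ b % 2 = 1 := by omega
      rcases hpar with h1 | h1
      · right
        have : IsCoprime (8:ℤ) a := by
          have : IsCoprime (2:ℤ) a := by
            rw [Int.prime_two.coprime_iff_not_dvd]; omega
          have := this.pow_left (m := 3)
          simpa using this
        have := this.dvd_of_dvd_mul_left ⟨_, hab⟩
        omega
      · left
        have : IsCoprime (8:ℤ) b := by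
          have : IsCoprime (2:ℤ) b := by
            rw [Int.prime_two.coprime_iff_not_dvd]; omega
          have := this.pow_left (m := 3)
          simpa using this
        have := this.dvd_of_dvd_mul_right ⟨_, hab⟩
        omega
    zify at h
    have hgen : ∀ c d : ℤ, (c - 7 * d).natAbs = x → (c + d).natAbs = y →
        ∃ a, ∃ (ha : a ∈ (ellPts 7 M)),
          ((a.1 - 7 * a.2).natAbs, (a.1 + a.2).natAbs) = (x, y) := by
      intro c d hx hw
      have hn : c ^ 2 + 7 * d ^ 2 = M := by
        have hx' : ((x:ℤ)) ^ 2 = (c - 7 * d) ^ 2 := by rw [← hx]; simp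
        have hw' : ((y:ℤ)) ^ 2 = (c + d) ^ 2 := by rw [← hw]; simp
        rw [hx', hw'] at h
        linarith
      have hc : c ≠ 0 := by
        rintro rfl
        rcases Int.even_or_odd' d with ⟨t, rfl | rfl⟩ <;> ring_nf at hn <;> omega
      rcases lt_or_gt_of_ne hc with h | h
      · refine ⟨(-c, -d), ?_, ?_⟩
        · rw [mem_ellPts (by norm_num)]
          refine ⟨by omega, ?_⟩
          push_cast; linarith
        · simp only [Prod.mk.injEq]; omega
      · refine ⟨(c, d), ?_, ?_⟩
        · rw [mem_ellPts (by norm_num)]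
          refine ⟨by omega, ?_⟩
          push_cast; linarith
        · simp only [Prod.mk.injEq]; omega
    rcases hdvd with ⟨t, ht⟩ | ⟨t, ht⟩
    · exact hgen (y + t) (-t) (by omega) (by omega)
    · exact hgen (-y + t) (-t) (by omega) (by omega)

lemma count_seven_b (M : ℕ) (hM : M % 6 = 5) (S : Finset (ℕ × ℕ))
    (hS : ∀ x y, (x, y) ∈ S ↔ (x ^ 2 + 7 * y ^ 2 = 16 * M ∧ x % 2 = 1 ∧ y % 2 = 1)) :
    (S.card : ZMod 2) = 0 := by
  classical
  have hsq : ∀ c : ℤ, c ^ 2 % 3 = 0 ∨ c ^ 2 % 3 = 1 := by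
    intro c
    have : c % 3 = 0 ∨ c % 3 = 1 ∨ c % 3 = 2 := by omega
    rcases this with h | h | h <;> simp [pow_two, Int.mul_emod, h]
  have hns : ¬ IsSquare M := by
    rintro ⟨r, hr⟩
    have := hsq r
    have h' : (M:ℤ) = (r:ℤ) ^ 2 := by rw [hr]; push_cast; ring
    omega
  have h0 := card_ellPts (κ := 7) (by norm_num) (by omega : 0 < M)
  rw [if_neg hns] at h0
  rw [← h0]
  congr 1
  symm
  have hodd : ∀ c d : ℤ, c ^ 2 + 7 * d ^ 2 = M → (c + d) % 2 = 1 := by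
    intro c d h
    rcases Int.even_or_odd' c with ⟨s, rfl | rfl⟩ <;>
      rcases Int.even_or_odd' d with ⟨t, rfl | rfl⟩ <;> ring_nf at h <;> omega
  refine Finset.card_bij (fun q _ => ((3 * q.1 + 7 * q.2).natAbs, (q.1 - 3 * q.2).natAbs)) ?_ ?_ ?_
  · rintro ⟨c, d⟩ h
    rw [mem_ellPts (by norm_num)] at h
    rw [hS]
    have := h.2
    push_cast at this
    have := hodd c d this
    refine ⟨?_, ?_, ?_⟩
    · zify
      rw [sq_abs, sq_abs]
      linear_combination 16 * h.2
    · simp only; omega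
    · simp only; omega
  · rintro ⟨c, d⟩ h ⟨c', d'⟩ h' heq
    rw [mem_ellPts (by norm_num)] at h h'
    simp only [Prod.mk.injEq] at heq ⊢
    have o1 := hodd c d (by exact_mod_cast h.2)
    have o2 := hodd c' d' (by exact_mod_cast h'.2)
    have p1 := h.1
    have p2 := h'.1
    clear h h'
    omega
  · rintro ⟨x, y⟩ h
    rw [hS] at h
    obtain ⟨h, hx, hy⟩ := h
    have hdvd : (16:ℤ) ∣ x - 3 * y ∨ (16:ℤ) ∣ x + 3 * y := by
      obtain ⟨a, ha⟩ : ∃ a : ℤ, (x:ℤ) - 3 * y = 2 * a := ⟨((x:ℤ) - 3 * y) / 2, by omega⟩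
      obtain ⟨b, hb⟩ : ∃ b : ℤ, (x:ℤ) + 3 * y = 2 * b := ⟨((x:ℤ) + 3 * y) / 2, by omega⟩
      obtain ⟨t, ht⟩ : ∃ t : ℤ, (y:ℤ) = 2 * t + 1 := ⟨((y:ℤ)) / 2, by omega⟩
      obtain ⟨n, hn⟩ : ∃ n : ℤ, (M:ℤ) = 2 * n + 1 := ⟨((M:ℤ)) / 2, by omega⟩
      have hab : a * b = 8 * (n - 2 * t ^ 2 - 2 * t) := by
        zify at h
        have : (2 * a) * (2 * b) = 16 * (M - (y:ℤ)^2) := by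
          rw [← ha, ← hb]; linear_combination h
        rw [hn, ht] at this
        linarith
      have hpar : a % 2 = 1 ∨ b % 2 = 1 := by omega
      rcases hpar with h1 | h1
      · right
        have : IsCoprime (8:ℤ) a := by
          have : IsCoprime (2:ℤ) a := by
            rw [Int.prime_two.coprime_iff_not_dvd]; omega
          have := this.pow_left (m := 3)
          simpa using this
        have := this.dvd_of_dvd_mul_left ⟨_, hab⟩
        omega
      · left
        have : IsCoprime (8:ℤ) b := by
          have : IsCoprime (2:ℤ) b := by
            rw [Int.prime_two.coprime_iff_not_dvd]; omega
          have := this.pow_left (m := 3)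
          simpa using this
        have := this.dvd_of_dvd_mul_right ⟨_, hab⟩
        omega
    zify at h
    have hgen : ∀ c d : ℤ, (3 * c + 7 * d).natAbs = x → (c - 3 * d).natAbs = y →
        ∃ a, ∃ (ha : a ∈ (ellPts 7 M)),
          ((3 * a.1 + 7 * a.2).natAbs, (a.1 - 3 * a.2).natAbs) = (x, y) := by
      intro c d hx hw
      have hn : c ^ 2 + 7 * d ^ 2 = M := by
        have hx' : ((x:ℤ)) ^ 2 = (3 * c + 7 * d) ^ 2 := by rw [← hx]; simp
        have hw' : ((y:ℤ)) ^ 2 = (c - 3 * d) ^ 2 := by rw [← hw]; simp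
        rw [hx', hw'] at h
        linarith
      have hc : c ≠ 0 := by
        rintro rfl
        have := hsq d
        omega
      rcases lt_or_gt_of_ne hc with h | h
      · refine ⟨(-c, -d), ?_, ?_⟩
        · rw [mem_ellPts (by norm_num)]
          refine ⟨by omega, ?_⟩
          push_cast; linarith
        · simp only [Prod.mk.injEq]; omega
      · refine ⟨(c, d), ?_, ?_⟩
        · rw [mem_ellPts (by norm_num)]
          refine ⟨by omega, ?_⟩
          push_cast; linarith
        · simp only [Prod.mk.injEq]; omega
    rcases hdvd with ⟨t, ht⟩ | ⟨t, ht⟩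
    · exact hgen (y + 3 * t) t (by omega) (by omega)
    · exact hgen (-y + 3 * t) t (by omega) (by omega)

lemma thue_six (p : ℕ) (hp : p.Prime) (hp5 : 5 ≤ p) (t : ZMod p) (ht : t ^ 2 = -6) :
    ∃ x y : ℤ, y ≠ 0 ∧ ∃ m : ℤ, 0 < m ∧ m < 7 ∧ x ^ 2 + 6 * y ^ 2 = m * p := by
  classical
  have := Fact.mk hp
  set r := Nat.sqrt p with hr
  have hlt : p < (r + 1) * (r + 1) := Nat.lt_succ_sqrt p
  have hle : r * r ≤ p := Nat.sqrt_le p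
  have hne : r * r ≠ p := by
    intro h
    exact (Irreducible.not_isSquare hp) ⟨r, h.symm⟩
  let A : Finset (ℕ × ℕ) := Finset.range (r + 1) ×ˢ Finset.range (r + 1)
  obtain ⟨⟨a, b⟩, h1, ⟨a', b'⟩, h2, hne', heq⟩ :=
    Finset.exists_ne_map_eq_of_card_lt_of_maps_to (s := A) (t := (Finset.univ : Finset (ZMod p)))
      (f := fun q => (q.1 : ZMod p) - t * q.2) (by simp [A, ZMod.card]; exact hlt)
      (by intro _ _; simp)
  simp only [A, Finset.mem_product, Finset.mem_range] at h1 h2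
  simp only at heq
  have hdvd : (p : ℤ) ∣ ((a:ℤ) - a') ^ 2 + 6 * ((b:ℤ) - b') ^ 2 := by
    rw [← ZMod.intCast_zmod_eq_zero_iff_dvd]
    push_cast
    have : (a : ZMod p) - a' = t * (b - b') := by linear_combination heq
    rw [this]
    linear_combination ((b:ZMod p) - b') ^ 2 * ht
  have ha2 : ((a:ℤ) - a') ^ 2 < p := by
    have : ((a:ℤ) - a') ^ 2 ≤ r ^ 2 := sq_le_sq' (by omega) (by omega)
    have h3 : (r:ℤ) ^ 2 ≤ p := by rw [pow_two]; exact_mod_cast hle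
    have h4 : (r:ℤ) ^ 2 ≠ p := by rw [pow_two]; exact_mod_cast hne
    omega
  have hb2 : ((b:ℤ) - b') ^ 2 < p := by
    have : ((b:ℤ) - b') ^ 2 ≤ r ^ 2 := sq_le_sq' (by omega) (by omega)
    have h3 : (r:ℤ) ^ 2 ≤ p := by rw [pow_two]; exact_mod_cast hle
    have h4 : (r:ℤ) ^ 2 ≠ p := by rw [pow_two]; exact_mod_cast hne
    omega
  have hb0 : (b:ℤ) - b' ≠ 0 := by
    intro h0
    rw [h0] at hdvd
    have h5 : (p:ℤ) ∣ ((a:ℤ) - a') ^ 2 := by simpa using hdvd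
    have h6 := Int.eq_zero_of_abs_lt_dvd h5 (by rw [abs_of_nonneg (sq_nonneg _)]; exact ha2)
    have h7 : (a:ℤ) - a' = 0 := by simpa using h6
    apply hne'
    simp only [Prod.mk.injEq]; omega
  obtain ⟨m, hm⟩ := hdvd
  refine ⟨(a:ℤ) - a', (b:ℤ) - b', hb0, m, ?_, ?_, by linarith⟩
  · have : 0 < ((b:ℤ) - b') ^ 2 := by positivity
    have := sq_nonneg ((a:ℤ) - a')
    by_contra hcon
    push Not at hcon
    nlinarith
  · by_contra hcon
    push Not at hcon
    nlinarith

lemma rep_of_sqrt (p : ℕ) (hp : p.Prime) (hp5 : 5 ≤ p) (t : ZMod p) (ht : t ^ 2 = -6) :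
    ∃ u v : ℤ, v ≠ 0 ∧ u ^ 2 + 24 * v ^ 2 = (p:ℤ) ^ 2 := by
  obtain ⟨x, y, hy, m, hm0, hm7, h⟩ := thue_six p hp hp5 t ht
  have hpp : Prime (p:ℤ) := Nat.prime_iff_prime_int.mp hp
  have hnsq : ∀ z : ℤ, z ^ 2 ≠ p := by
    intro z hz
    apply Irreducible.not_isSquare (hp : Irreducible p)
    refine ⟨z.natAbs, ?_⟩
    zify
    rw [abs_mul_abs_self, ← hz]; ring
  have hoddp : (p:ℤ) % 2 = 1 := by
    have := hp.eq_two_or_odd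
    omega
  have hp3 : (p:ℤ) % 3 ≠ 0 := by
    intro h3
    have : 3 ∣ p := by omega
    have := (Nat.prime_dvd_prime_iff_eq Nat.prime_three hp).mp this
    omega
  have caseA : ∀ a b : ℤ, a ^ 2 + 6 * b ^ 2 = p →
      ∃ u v : ℤ, v ≠ 0 ∧ u ^ 2 + 24 * v ^ 2 = (p:ℤ) ^ 2 := by
    intro a b hab
    refine ⟨a ^ 2 - 6 * b ^ 2, a * b, ?_, by rw [← hab]; ring⟩
    apply mul_ne_zero
    · rintro rfl; have : (p:ℤ) = 2 * (3 * b ^ 2) := by linarith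
      omega
    · rintro rfl; exact hnsq a (by linarith)
  have caseB : ∀ a b : ℤ, 2 * a ^ 2 + 3 * b ^ 2 = p →
      ∃ u v : ℤ, v ≠ 0 ∧ u ^ 2 + 24 * v ^ 2 = (p:ℤ) ^ 2 := by
    intro a b hab
    refine ⟨2 * a ^ 2 - 3 * b ^ 2, a * b, ?_, by rw [← hab]; ring⟩
    apply mul_ne_zero
    · rintro rfl; omega
    · rintro rfl; omega
  have even_of : ∀ z : ℤ, (2:ℤ) ∣ z ^ 2 → (2:ℤ) ∣ z := fun z hz => Int.prime_two.dvd_of_dvd_pow hz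
  have three_of : ∀ z : ℤ, (3:ℤ) ∣ z ^ 2 → (3:ℤ) ∣ z := fun z hz =>
    Int.prime_three.dvd_of_dvd_pow hz
  interval_cases m
  · exact caseA x y (by linarith)
  · obtain ⟨z, rfl⟩ := even_of x (by omega)
    exact caseB z y (by linarith)
  · obtain ⟨z, rfl⟩ := three_of x (by omega)
    exact caseB y z (by linarith)
  · obtain ⟨z, rfl⟩ := even_of x (by omega)
    have h' : 2 * z ^ 2 + 3 * y ^ 2 = 2 * p := by linarith
    obtain ⟨w, rfl⟩ := even_of y (by omega)
    exact caseA z w (by linarith)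
  · have h5 : (5:ℤ) ∣ (x - 2 * y) * (x + 2 * y) := ⟨p - 2 * y ^ 2, by linear_combination h⟩
    have p5 : Prime (5:ℤ) := Nat.prime_iff_prime_int.mp (by norm_num)
    rcases p5.dvd_or_dvd h5 with ⟨s, hs⟩ | ⟨s, hs⟩
    · have hx : x = 2 * y + 5 * s := by linarith
      subst hx
      exact caseB (y + s) s (by linarith)
    · have hx : x = -2 * y + 5 * s := by linarith
      subst hx
      exact caseB (-y + s) s (by linarith)
  · obtain ⟨z, rfl⟩ := even_of x (by omega)
    have h' : 2 * z ^ 2 + 3 * y ^ 2 = 3 * p := by linarith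
    obtain ⟨w, rfl⟩ := three_of z (by omega)
    exact caseA y w (by linarith)

lemma dvd_u_of_dvd {p : ℕ} (hp : p.Prime) (u v N : ℤ) (h : u ^ 2 + 24 * v ^ 2 = p * N)
    (hv : (p:ℤ) ∣ v) : (p:ℤ) ∣ u := by
  have hpp : Prime (p:ℤ) := Nat.prime_iff_prime_int.mp hp
  apply hpp.dvd_of_dvd_pow (n := 2)
  obtain ⟨s, rfl⟩ := hv
  exact ⟨N - 24 * p * s ^ 2, by linear_combination h⟩

lemma not_dvd_24 {p : ℕ} (hp : p.Prime) (hp5 : 5 ≤ p) : ¬ (p:ℤ) ∣ 24 := by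
  intro h
  have h : p ∣ 24 := by exact_mod_cast h
  have : p ∣ 2 ^ 3 * 3 := by simpa using h
  rcases (Nat.Prime.dvd_mul hp).mp this with h | h
  · have := (Nat.prime_dvd_prime_iff_eq hp Nat.prime_two).mp (hp.dvd_of_dvd_pow h)
    omega
  · have := (Nat.prime_dvd_prime_iff_eq hp Nat.prime_three).mp h
    omega

lemma dvd_v_of_dvd {p : ℕ} (hp : p.Prime) (hp5 : 5 ≤ p) (u v N : ℤ)
    (h : u ^ 2 + 24 * v ^ 2 = p * N) (hu : (p:ℤ) ∣ u) : (p:ℤ) ∣ v := by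
  have hpp : Prime (p:ℤ) := Nat.prime_iff_prime_int.mp hp
  apply hpp.dvd_of_dvd_pow (n := 2)
  obtain ⟨s, rfl⟩ := hu
  have : (p:ℤ) ∣ 24 * v ^ 2 := ⟨N - p * s ^ 2, by linear_combination h⟩
  rcases hpp.dvd_or_dvd this with h | h
  · exact absurd h (not_dvd_24 hp hp5)
  · exact h

/-- `p²` divides one of the two factors. -/
lemma sq_dvd_or {p : ℕ} (hp : p.Prime) (hp5 : 5 ≤ p) (a b : ℤ)
    (h : (p:ℤ) ^ 2 ∣ (a - b) * (a + b)) :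
    (p:ℤ) ∣ a ∨ (p:ℤ) ^ 2 ∣ a - b ∨ (p:ℤ) ^ 2 ∣ a + b := by
  have hpp : Prime (p:ℤ) := Nat.prime_iff_prime_int.mp hp
  by_cases h1 : (p:ℤ) ∣ a - b
  · by_cases h2 : (p:ℤ) ∣ a + b
    · left
      have : (p:ℤ) ∣ 2 * a := by
        have := dvd_add h1 h2
        ring_nf at this ⊢
        exact this
      rcases hpp.dvd_or_dvd this with h | h
      · exfalso
        have : (p:ℤ) ≤ 2 := Int.le_of_dvd (by norm_num) h
        omega
      · exact h
    · right; left
      have : IsCoprime ((p:ℤ) ^ 2) (a + b) :=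
        (hpp.coprime_iff_not_dvd.mpr h2).pow_left
      exact this.dvd_of_dvd_mul_right h
  · right; right
    have : IsCoprime ((p:ℤ) ^ 2) (a - b) :=
        (hpp.coprime_iff_not_dvd.mpr h1).pow_left
    exact this.dvd_of_dvd_mul_left h

lemma three_dvd_all (p : ℕ) (hp : p.Prime) (hp5 : 5 ≤ p)
    (H : ∀ u v : ℤ, u ^ 2 + 24 * v ^ 2 = (p:ℤ) ^ 2 → (3:ℤ) ∣ v) (j : ℕ) :
    ∀ u v : ℤ, u ^ 2 + 24 * v ^ 2 = (p:ℤ) ^ (2 * j) → (3:ℤ) ∣ v := by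
  have hpp : Prime (p:ℤ) := Nat.prime_iff_prime_int.mp hp
  have hp0 : (p:ℤ) ≠ 0 := hpp.ne_zero
  induction j with
  | zero =>
    intro u v h
    simp only [mul_zero, pow_zero] at h
    have : v = 0 := by
      by_contra h0
      have : 0 < v ^ 2 := by positivity
      nlinarith [sq_nonneg u]
    simp [this]
  | succ j ih =>
    intro u v h
    have hexp : (p:ℤ) ^ (2 * (j + 1)) = p ^ 2 * p ^ (2 * j) := by ring
    rw [hexp] at h
    by_cases hv : (p:ℤ) ∣ v
    · have hu := dvd_u_of_dvd hp u v (p * p ^ (2 * j)) (by rw [h]; ring) hv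
      obtain ⟨a, rfl⟩ := hu
      obtain ⟨b, rfl⟩ := hv
      have : a ^ 2 + 24 * b ^ 2 = (p:ℤ) ^ (2 * j) := by
        apply mul_left_cancel₀ (pow_ne_zero 2 hp0)
        linear_combination h
      exact Dvd.dvd.mul_left (ih a b this) _
    · obtain ⟨u1, v1, hv1, h1⟩ : ∃ u v : ℤ, v ≠ 0 ∧ u ^ 2 + 24 * v ^ 2 = (p:ℤ) ^ 2 := by
        have := Fact.mk hp
        have hvz : (v : ZMod p) ≠ 0 := by
          rwa [Ne, ZMod.intCast_zmod_eq_zero_iff_dvd]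
        have h2z : (2 : ZMod p) ≠ 0 := by
          intro h
          have : ((2:ℤ) : ZMod p) = 0 := by exact_mod_cast h
          rw [ZMod.intCast_zmod_eq_zero_iff_dvd] at this
          have := Int.le_of_dvd (by norm_num) this
          omega
        apply rep_of_sqrt p hp hp5 ((u : ZMod p) / (2 * v))
        have hz : (u : ZMod p) ^ 2 + 24 * v ^ 2 = 0 := by
          have := congrArg (Int.cast : ℤ → ZMod p) h
          push_cast at this
          rw [this]
          simp
        field_simp
        linear_combination hz
      have h3v1 := H u1 v1 h1
      have hpv1 : ¬ (p:ℤ) ∣ v1 := by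
        intro hd
        have hd2 : (p:ℤ) ^ 2 ∣ v1 ^ 2 := pow_dvd_pow_of_dvd hd 2
        have hle := Int.le_of_dvd (by positivity) hd2
        have : 0 < v1 ^ 2 := by positivity
        nlinarith [sq_nonneg u1]
      have main : ∀ w : ℤ, (w = v1 ∨ w = -v1) → (p:ℤ) ^ 2 ∣ w * u - u1 * v → (3:ℤ) ∣ v := by
        intro w hw hd
        have h1' : u1 ^ 2 + 24 * w ^ 2 = (p:ℤ) ^ 2 := by rcases hw with rfl | rfl <;> linarith
        have h3w : (3:ℤ) ∣ w := by rcases hw with rfl | rfl <;> simpa using h3v1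
        obtain ⟨v', hv'⟩ := hd
        have hid : (u * u1 + 24 * v * w) ^ 2 =
            ((p:ℤ) ^ 2) ^ 2 * (p ^ (2 * j) - 24 * v' ^ 2) := by
          have : (u * u1 + 24 * v * w) ^ 2 + 24 * (w * u - u1 * v) ^ 2
             = (u ^ 2 + 24 * v ^ 2) * (u1 ^ 2 + 24 * w ^ 2) := by ring
          rw [hv', h, h1'] at this
          linear_combination this
        have hd' : (p:ℤ) ^ 2 ∣ u * u1 + 24 * v * w := by
          rw [← Int.pow_dvd_pow_iff (n := 2) (by norm_num)]
          exact ⟨_, hid⟩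
        obtain ⟨u', hu'⟩ := hd'
        have hnorm : u' ^ 2 + 24 * v' ^ 2 = (p:ℤ) ^ (2 * j) := by
          rw [hu'] at hid
          apply mul_left_cancel₀ (pow_ne_zero 2 (pow_ne_zero 2 hp0))
          linear_combination hid
        have h3v' := ih u' v' hnorm
        have hv : v = u' * w - v' * u1 := by
          apply mul_left_cancel₀ (pow_ne_zero 2 hp0)
          linear_combination (-v) * h1' + w * hu' - u1 * hv'
        rw [hv]
        exact dvd_sub (Dvd.dvd.mul_left h3w _) (Dvd.dvd.mul_right h3v' _)
      have hprod : (p:ℤ) ^ 2 ∣ (v1 * u - u1 * v) * (v1 * u + u1 * v) := by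
        refine ⟨v1 ^ 2 * p ^ (2 * j) - v ^ 2, ?_⟩
        linear_combination v1 ^ 2 * h - v ^ 2 * h1
      rcases sq_dvd_or hp hp5 _ _ hprod with hd | hd | hd
      · exfalso
        rcases hpp.dvd_or_dvd hd with hd | hd
        · exact hpv1 hd
        · exact hv (dvd_v_of_dvd hp hp5 u v (p * p ^ (2 * j)) (by rw [h]; ring) hd)
      · exact main v1 (Or.inl rfl) hd
      · apply main (-v1) (Or.inr rfl)
        have := (dvd_neg).mpr hd
        ring_nf at this ⊢
        exact this

lemma uniq_rep (p : ℕ) (hp : p.Prime) (hp5 : 5 ≤ p) (u v u1 v1 : ℤ)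
    (hu : 0 < u) (hu1 : 0 < u1) (hv : v ≠ 0) (hv1 : v1 ≠ 0)
    (h : u ^ 2 + 24 * v ^ 2 = (p:ℤ) ^ 2) (h1 : u1 ^ 2 + 24 * v1 ^ 2 = (p:ℤ) ^ 2) :
    u = u1 ∧ (v = v1 ∨ v = -v1) := by
  have hpp : Prime (p:ℤ) := Nat.prime_iff_prime_int.mp hp
  have hp0 : (0:ℤ) < p := by omega
  have hsm : ∀ z w : ℤ, w ≠ 0 → z ≠ 0 → w ^ 2 + 24 * z ^ 2 = (p:ℤ) ^ 2 →
      ¬ (p:ℤ) ∣ z ∧ ¬ (p:ℤ) ∣ w := by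
    intro z w hw hz h
    have a1 : 0 < w ^ 2 := by positivity
    have a2 : 0 < z ^ 2 := by positivity
    constructor
    · intro hd
      have := Int.le_of_dvd a2 (pow_dvd_pow_of_dvd hd 2)
      nlinarith
    · intro hd
      have := Int.le_of_dvd a1 (pow_dvd_pow_of_dvd hd 2)
      nlinarith
  have hprod : (p:ℤ) ^ 2 ∣ (v1 * u - u1 * v) * (v1 * u + u1 * v) := by
    refine ⟨v1 ^ 2 - v ^ 2, ?_⟩
    linear_combination v1 ^ 2 * h - v ^ 2 * h1
  have small : ∀ w : ℤ, (w = v1 ∨ w = -v1) → (p:ℤ) ^ 2 ∣ w * u - u1 * v → w * u = u1 * v := by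
    intro w hw hd
    have h1' : u1 ^ 2 + 24 * w ^ 2 = (p:ℤ) ^ 2 := by rcases hw with rfl | rfl <;> linarith
    have hid : (u * u1 + 24 * v * w) ^ 2 + 24 * (w * u - u1 * v) ^ 2 = ((p:ℤ) ^ 2) ^ 2 := by
      have : (u * u1 + 24 * v * w) ^ 2 + 24 * (w * u - u1 * v) ^ 2
             = (u ^ 2 + 24 * v ^ 2) * (u1 ^ 2 + 24 * w ^ 2) := by ring
      rw [this, h, h1']; ring
    have : w * u - u1 * v = 0 := by
      by_contra hne
      have hd2 := pow_dvd_pow_of_dvd hd 2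
      have a2 : 0 < (w * u - u1 * v) ^ 2 := by positivity
      have := Int.le_of_dvd a2 hd2
      nlinarith [sq_nonneg (u * u1 + 24 * v * w)]
    linarith
  have fin : ∀ w : ℤ, (w = v1 ∨ w = -v1) → w * u = u1 * v → u = u1 ∧ v = w := by
    intro w hw he
    have h1' : u1 ^ 2 + 24 * w ^ 2 = (p:ℤ) ^ 2 := by rcases hw with rfl | rfl <;> linarith
    have e : u ^ 2 = u1 ^ 2 := by
      apply mul_left_cancel₀ (pow_ne_zero 2 hp0.ne')
      linear_combination u1 ^ 2 * h - u ^ 2 * h1' + (24 * (w * u + u1 * v)) * he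
    have hu' : u = u1 := by
      rcases sq_eq_sq_iff_eq_or_eq_neg.mp e with h | h
      · exact h
      · omega
    refine ⟨hu', ?_⟩
    subst hu'
    apply mul_left_cancel₀ hu.ne'
    linarith
  rcases sq_dvd_or hp hp5 _ _ hprod with hd | hd | hd
  · exfalso
    rcases hpp.dvd_or_dvd hd with hd | hd
    · exact (hsm v1 u1 hu1.ne' hv1 h1).1 hd
    · exact (hsm v u hu.ne' hv h).2 hd
  · have := fin v1 (Or.inl rfl) (small v1 (Or.inl rfl) hd)
    exact ⟨this.1, Or.inl this.2⟩
  · have := fin (-v1) (Or.inr rfl) (small (-v1) (Or.inr rfl) (by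
      have := (dvd_neg).mpr hd
      ring_nf at this ⊢
      exact this))
    exact ⟨this.1, Or.inr this.2⟩

/-- Reduction of the count of points to the norm form. -/
lemma count_eleven (p : ℕ) (hp : p.Prime) (hp5 : 5 ≤ p) (hp11 : p ≠ 11) (j : ℕ)
    (S : Finset (ℕ × ℕ))
    (hS : ∀ k y, (k, y) ∈ S ↔ (8 * k ^ 2 + 3 * y ^ 2 = 11 * p ^ (2 * j) ∧ ¬ 3 ∣ y)) :
    S.card = ((ellPts 24 (p ^ (2 * j))).filter (fun q => ¬ (3:ℤ) ∣ q.1 + q.2)).card := by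
  classical
  symm
  have h11 : ∀ u v : ℤ, u ^ 2 + 24 * v ^ 2 = (p:ℤ) ^ (2 * j) → ¬ (11:ℤ) ∣ 5 * u + 4 * v := by
    rintro u v h ⟨t, ht⟩
    have hd : (11:ℤ) ∣ (p:ℤ) ^ (2 * j) := by
      rw [← h]
      have hu : u = 11 * (9 * t - 4 * u - 4 * v) + 8 * v := by omega
      rw [hu]
      generalize 9 * t - 4 * u - 4 * v = s
      exact ⟨11 * s ^ 2 + 16 * s * v + 8 * v ^ 2, by ring⟩
    have hd' : 11 ∣ p ^ (2 * j) := by exact_mod_cast hd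
    have := (Nat.prime_dvd_prime_iff_eq (by norm_num) hp).mp
      ((by norm_num : Nat.Prime 11).dvd_of_dvd_pow hd')
    exact hp11 this.symm
  have hpodd : (p ^ (2 * j)) % 2 = 1 := by
    have : Odd p := hp.odd_of_ne_two (by omega)
    exact Nat.odd_iff.mp this.pow
  refine Finset.card_bij (fun q _ => ((q.1 + 3 * q.2).natAbs, (q.1 - 8 * q.2).natAbs)) ?_ ?_ ?_
  · rintro ⟨c, d⟩ h
    simp only [Finset.mem_filter, mem_ellPts (κ := 24) (by norm_num)] at h
    obtain ⟨⟨h1, h2⟩, h3⟩ := h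
    rw [hS]
    refine ⟨?_, ?_⟩
    · zify
      rw [sq_abs, sq_abs]
      push_cast at h2
      linear_combination 11 * h2
    · simp only
      omega
  · rintro ⟨c, d⟩ h ⟨c', d'⟩ h' heq
    simp only [Finset.mem_filter, mem_ellPts (κ := 24) (by norm_num)] at h h'
    simp only [Prod.mk.injEq] at heq ⊢
    have a1 := h11 c d (by exact_mod_cast h.1.2)
    have a2 := h11 c' d' (by exact_mod_cast h'.1.2)
    have b1 := h.1.1
    have b2 := h'.1.1
    clear h h' h11
    omega
  · rintro ⟨k, y⟩ h
    rw [hS] at h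
    obtain ⟨h, hy⟩ := h
    have hdvd : (11:ℤ) ∣ y - k ∨ (11:ℤ) ∣ y + k := by
      have p11 : Prime (11:ℤ) := Nat.prime_iff_prime_int.mp (by norm_num)
      apply p11.dvd_or_dvd
      have : (11:ℤ) ∣ 3 * ((y - k) * (y + k)) := by
        zify at h
        exact ⟨p ^ (2 * j) - k ^ 2, by linear_combination h⟩
      rcases p11.dvd_or_dvd this with h | h
      · omega
      · exact h
    zify at h
    have hgen : ∀ c d : ℤ, (c + 3 * d).natAbs = k → (c - 8 * d).natAbs = y →
        ∃ a, ∃ (ha : a ∈ (ellPts 24 (p ^ (2 * j))).filter (fun q => ¬ (3:ℤ) ∣ q.1 + q.2)),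
          ((a.1 + 3 * a.2).natAbs, (a.1 - 8 * a.2).natAbs) = (k, y) := by
      intro c d hk hw
      have hn : c ^ 2 + 24 * d ^ 2 = (p:ℤ) ^ (2 * j) := by
        have hx' : ((k:ℤ)) ^ 2 = (c + 3 * d) ^ 2 := by rw [← hk]; simp
        have hw' : ((y:ℤ)) ^ 2 = (c - 8 * d) ^ 2 := by rw [← hw]; simp
        rw [hx', hw'] at h
        linarith
      have hc : c ≠ 0 := by
        rintro rfl
        zify at hpodd
        rw [← hn] at hpodd
        ring_nf at hpodd
        omega
      rcases lt_or_gt_of_ne hc with h | h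
      · refine ⟨(-c, -d), ?_, ?_⟩
        · simp only [Finset.mem_filter, mem_ellPts (κ := 24) (by norm_num)]
          refine ⟨⟨by omega, ?_⟩, by omega⟩
          push_cast; linarith
        · simp only [Prod.mk.injEq]; omega
      · refine ⟨(c, d), ?_, ?_⟩
        · simp only [Finset.mem_filter, mem_ellPts (κ := 24) (by norm_num)]
          refine ⟨⟨by omega, ?_⟩, by omega⟩
          push_cast; linarith
        · simp only [Prod.mk.injEq]; omega
    rcases hdvd with ⟨t, ht⟩ | ⟨t, ht⟩
    · exact hgen (k + 3 * t) (-t) (by omega) (by omega)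
    · exact hgen (-k + 3 * t) (-t) (by omega) (by omega)

lemma three_not_dvd_u {p : ℕ} (hp : p.Prime) (hp5 : 5 ≤ p) (j : ℕ) (u v : ℤ)
    (h : u ^ 2 + 24 * v ^ 2 = (p:ℤ) ^ (2 * j)) : ¬ (3:ℤ) ∣ u := by
  rintro ⟨t, rfl⟩
  have : (3:ℤ) ∣ (p:ℤ) ^ (2 * j) := by
    rw [← h]; exact ⟨3 * t ^ 2 + 8 * v ^ 2, by ring⟩
  have hd : 3 ∣ p ^ (2 * j) := by exact_mod_cast this
  have := (Nat.prime_dvd_prime_iff_eq Nat.prime_three hp).mp (Nat.prime_three.dvd_of_dvd_pow hd)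
  omega

lemma arith_main (p : ℕ) (hp : p.Prime) (hp5 : 5 ≤ p)
    (h1 : Odd ((ellPts 24 (p ^ (2 * 1))).filter (fun q => ¬ (3:ℤ) ∣ q.1 + q.2)).card) (j : ℕ) :
    Odd ((ellPts 24 (p ^ (2 * j))).filter (fun q => ¬ (3:ℤ) ∣ q.1 + q.2)).card := by
  classical
  have H : ∀ u v : ℤ, u ^ 2 + 24 * v ^ 2 = (p:ℤ) ^ 2 → (3:ℤ) ∣ v := by
    by_contra hcon
    push Not at hcon
    obtain ⟨u0, v0, h0, h3⟩ := hcon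
    have hu3 := three_not_dvd_u hp hp5 1 u0 v0 (by simpa using h0)
    obtain ⟨u, v, hu, h, hne⟩ : ∃ u v : ℤ, 0 < u ∧ u ^ 2 + 24 * v ^ 2 = (p:ℤ) ^ 2 ∧
        (3:ℤ) ∣ u - v := by
      have hu0 : u0 ≠ 0 := by rintro rfl; simp at hu3
      have hcases : (3:ℤ) ∣ u0 - v0 ∨ (3:ℤ) ∣ u0 + v0 := by
        have m1 : u0 % 3 = 1 ∨ u0 % 3 = 2 := by omega
        have m2 : v0 % 3 = 1 ∨ v0 % 3 = 2 := by omega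
        rcases m1 with m1 | m1 <;> rcases m2 with m2 | m2
        · left; omega
        · right; omega
        · right; omega
        · left; omega
      rcases lt_or_gt_of_ne hu0 with hs | hs <;> rcases hcases with hc | hc
      · exact ⟨-u0, -v0, by omega, by linarith, by omega⟩
      · exact ⟨-u0, v0, by omega, by linarith, by omega⟩
      · exact ⟨u0, v0, by omega, by linarith, by omega⟩
      · exact ⟨u0, -v0, by omega, by linarith, by omega⟩
    have hu3' := three_not_dvd_u hp hp5 1 u v (by simpa using h)
    have hv0 : v ≠ 0 := by omega
    have hset : (ellPts 24 (p ^ (2 * 1))).filter (fun q => ¬ (3:ℤ) ∣ q.1 + q.2)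
        = {((p:ℤ), (0:ℤ)), (u, v)} := by
      ext ⟨c, d⟩
      simp only [Finset.mem_filter, mem_ellPts (κ := 24) (by norm_num), Finset.mem_insert,
        Finset.mem_singleton, Prod.mk.injEq]
      constructor
      · rintro ⟨⟨a1, a2⟩, a3⟩
        push_cast at a2
        by_cases hd : d = 0
        · left
          subst hd
          refine ⟨?_, rfl⟩
          have : c ^ 2 = (p:ℤ) ^ 2 := by linarith
          rcases sq_eq_sq_iff_eq_or_eq_neg.mp this with h | h <;> omega
        · right
          have := uniq_rep p hp hp5 c d u v a1 hu hd hv0 (by linarith) h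
          refine ⟨this.1, ?_⟩
          omega
      · rintro (⟨rfl, rfl⟩ | ⟨rfl, rfl⟩)
        · refine ⟨⟨by omega, by push_cast; ring⟩, ?_⟩
          have := three_not_dvd_u hp hp5 1 p 0 (by ring)
          omega
        · refine ⟨⟨hu, by push_cast; linarith⟩, by omega⟩
    rw [hset, Finset.card_pair (by simp only [ne_eq, Prod.mk.injEq]; omega)] at h1
    exact absurd h1 (by decide)
  have hall := three_dvd_all p hp hp5 H j
  have hset : (ellPts 24 (p ^ (2 * j))).filter (fun q => ¬ (3:ℤ) ∣ q.1 + q.2)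
      = ellPts 24 (p ^ (2 * j)) := by
    apply Finset.filter_true_of_mem
    rintro ⟨c, d⟩ hq
    rw [mem_ellPts (by norm_num)] at hq
    have hq2 := hq.2
    push_cast at hq2
    have a := hall c d hq2
    have b := three_not_dvd_u hp hp5 j c d hq2
    simp only
    omega
  rw [hset]
  have hc := card_ellPts (κ := 24) (m := p ^ (2 * j)) (by norm_num) (by have := hp.pos; positivity)
  rw [if_pos ⟨p ^ j, by ring⟩] at hc
  rw [← ZMod.natCast_eq_one_iff_odd]
  exact hc

/-- The theta-type series `∑ X^((x²-1)/24)`. -/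
noncomputable def serP : PowerSeries (ZMod 2) :=
  PowerSeries.mk fun n => if IsSquare (24 * n + 1) then 1 else 0

/-- The theta-type series `∑ X^((k²-1)/3)`. -/
noncomputable def serT : PowerSeries (ZMod 2) :=
  PowerSeries.mk fun n => if IsSquare (3 * n + 1) then 1 else 0

noncomputable def serB : PowerSeries (ZMod 2) :=
  PowerSeries.mk fun n => (b21 n : ZMod 2)

noncomputable def sect (r : ℕ) (F : PowerSeries (ZMod 2)) : PowerSeries (ZMod 2) :=
  PowerSeries.mk fun n => PowerSeries.coeff (4 * n + r) F

lemma isSquare_pent (n : ℕ) : IsSquare (24 * n + 1) ↔ n ∈ Set.range pentagonal := by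
  constructor
  · rintro ⟨r, hr⟩
    have hr6 : r % 6 = 1 ∨ r % 6 = 5 := by
      have : (r * r) % 6 = 1 := by rw [← hr]; omega
      have h6 : r % 6 < 6 := Nat.mod_lt _ (by norm_num)
      rw [Nat.mul_mod] at this
      interval_cases h : r % 6 <;> simp_all
    rcases hr6 with h | h
    · refine ⟨-((r / 6 : ℕ) : ℤ), ?_⟩
      have h2 := two_mul_natCast_pentagonal_neg ((r / 6 : ℕ) : ℤ)
      have hr' : r = 6 * (r / 6) + 1 := by omega
      generalize r / 6 = s at *
      subst hr'
      zify
      zify at hr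
      linarith
    · refine ⟨((r / 6 + 1 : ℕ) : ℤ), ?_⟩
      have h2 := two_mul_natCast_pentagonal ((r / 6 + 1 : ℕ) : ℤ)
      have hr' : r = 6 * (r / 6) + 5 := by omega
      generalize r / 6 = s at *
      subst hr'
      zify
      zify at hr
      push_cast at h2
      linarith
  · rintro ⟨k, rfl⟩
    have h2 := two_mul_natCast_pentagonal k
    refine ⟨(6 * k - 1).natAbs, ?_⟩
    zify
    rw [abs_mul_abs_self]
    linear_combination 12 * h2

lemma serP_eq : serP = PowerSeries.pentagonalSeries (ZMod 2) := by
  ext n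
  simp only [serP, PowerSeries.coeff_mk]
  split_ifs with h
  · rw [isSquare_pent] at h
    obtain ⟨k, rfl⟩ := h
    rw [PowerSeries.coeff_pentagonalSeries_pentagonal]
    rcases Int.even_or_odd k with h | h
    · rw [Int.negOnePow_even k h]; rfl
    · rw [Int.negOnePow_odd k h]; rfl
  · rw [isSquare_pent] at h
    rw [PowerSeries.coeff_pentagonalSeries_eq_zero _ h]

section
open PowerSeries PowerSeries.WithPiTopology

lemma hasProd_expand (k : ℕ) (hk : k ≠ 0) [TopologicalSpace (ZMod 2)] :
    HasProd (fun n => (1 - X ^ ((n + 1) * k) : PowerSeries (ZMod 2))) (expand k hk serP) := by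
  have h := hasProd_one_sub_X_pow (ZMod 2)
  rw [← serP_eq] at h
  have hcont : Continuous (expand k hk : PowerSeries (ZMod 2) → PowerSeries (ZMod 2)) := by
    rw [continuous_iff_continuousAt]
    intro f
    rw [ContinuousAt, tendsto_iff_coeff_tendsto]
    intro d
    simp only [coeff_expand]
    split_ifs
    · exact (continuous_coeff (ZMod 2) (d / k)).continuousAt
    · exact tendsto_const_nhds
  have h' := h.map (expand k hk) hcont
  convert h' using 1
  ext1 n
  simp [Function.comp, ← pow_mul, mul_comm]

lemma serB_mul : serB * serP = expand 21 (by norm_num) serP := by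
  let _ : TopologicalSpace (ZMod 2) := ⊥
  have _ : DiscreteTopology (ZMod 2) := ⟨rfl⟩
  have hB : serB = PowerSeries.mk fun n => ((Nat.Partition.countRestricted n 21).card : ZMod 2) := by
    rw [← Nat.Partition.powerSeriesMk_card_restricted_eq_powerSeriesMk_card_countRestricted
      (ZMod 2) (by norm_num)]
    rfl
  have h1 := Nat.Partition.hasProd_powerSeriesMk_card_countRestricted (ZMod 2)
    (m := 21) (by norm_num)
  rw [← hB] at h1
  have h2 := hasProd_one_sub_X_pow (ZMod 2)
  rw [← serP_eq] at h2
  have h3 := h1.mul h2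
  have h4 := hasProd_expand 21 (by norm_num)
  refine h3.unique ?_
  have he : (fun b : ℕ => (∑ j ∈ Finset.range 21, (X : PowerSeries (ZMod 2)) ^ ((b + 1) * j)) *
      (1 - X ^ (b + 1))) = fun n => 1 - X ^ ((n + 1) * 21) := by
    ext1 n
    simp_rw [pow_mul]
    rw [geom_sum_mul_neg]
  rw [he]
  exact h4

lemma sq_eq_expand (F : PowerSeries (ZMod 2)) : F ^ 2 = expand 2 (by norm_num) F := by
  have h := MvPowerSeries.map_frobenius_expand (σ := Unit) 2 (by norm_num) (f := (F : MvPowerSeries Unit (ZMod 2)))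
  rw [← h]
  have : frobenius (ZMod 2) 2 = RingHom.id _ := by
    exact ZMod.frobenius_zmod 2
  rw [this]
  rfl

end

section
open PowerSeries

open Classical in
lemma coeff_mul_theta (F G : PowerSeries (ZMod 2)) (E H : ℕ → ℕ → Prop)
    (hF : ∀ i, coeff i F = if ∃ x, E x i then 1 else 0)
    (hG : ∀ i, coeff i G = if ∃ x, H x i then 1 else 0)
    (E1 : ∀ x i i', E x i → E x i' → i = i') (E2 : ∀ x x' i, E x i → E x' i → x = x')
    (H1 : ∀ x i i', H x i → H x i' → i = i') (H2 : ∀ x x' i, H x i → H x' i → x = x')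
    (n : ℕ) (S : Finset (ℕ × ℕ))
    (hS : ∀ x y, (x, y) ∈ S ↔ ∃ i j, i + j = n ∧ E x i ∧ H y j) :
    coeff n (F * G) = (S.card : ZMod 2) := by
  rw [coeff_mul]
  have h1 : ∀ q ∈ Finset.HasAntidiagonal.antidiagonal n, coeff q.1 F * coeff q.2 G =
      if (∃ x, E x q.1) ∧ (∃ y, H y q.2) then 1 else 0 := by
    intro q _
    rw [hF, hG]
    by_cases a : ∃ x, E x q.1 <;> by_cases b : ∃ y, H y q.2 <;> simp [a, b]
  rw [Finset.sum_congr rfl h1, Finset.sum_boole]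
  congr 1
  refine Finset.card_bij (fun q hq => ((Finset.mem_filter.mp hq).2.1.choose,
    (Finset.mem_filter.mp hq).2.2.choose)) ?_ ?_ ?_
  · intro q hq
    rw [hS]
    exact ⟨q.1, q.2, by simpa using (Finset.mem_filter.mp hq).1,
      (Finset.mem_filter.mp hq).2.1.choose_spec, (Finset.mem_filter.mp hq).2.2.choose_spec⟩
  · intro q hq q' hq' heq
    have a1 := (Finset.mem_filter.mp hq).2.1.choose_spec
    have a2 := (Finset.mem_filter.mp hq).2.2.choose_spec
    have b1 := (Finset.mem_filter.mp hq').2.1.choose_spec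
    have b2 := (Finset.mem_filter.mp hq').2.2.choose_spec
    simp only [Prod.mk.injEq] at heq
    rw [heq.1] at a1
    rw [heq.2] at a2
    exact Prod.ext (E1 _ _ _ a1 b1) (H1 _ _ _ a2 b2)
  · rintro ⟨x, y⟩ hxy
    obtain ⟨i, j, hij, hx, hy⟩ := (hS x y).mp hxy
    have hmem : (i, j) ∈ (Finset.HasAntidiagonal.antidiagonal n).filter
        (fun q => (∃ x, E x q.1) ∧ (∃ y, H y q.2)) := by
      simp only [Finset.mem_filter, Finset.HasAntidiagonal.mem_antidiagonal]
      exact ⟨hij, ⟨x, hx⟩, ⟨y, hy⟩⟩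
    refine ⟨(i, j), hmem, ?_⟩
    have a1 := (Finset.mem_filter.mp hmem).2.1.choose_spec
    have a2 := (Finset.mem_filter.mp hmem).2.2.choose_spec
    exact Prod.ext (E2 _ _ _ a1 hx) (H2 _ _ _ a2 hy)

open Classical in
/-- natural points on `a x² + b y² = L` with a side condition. -/
noncomputable def quadPts (a b L : ℕ) (C : ℕ → ℕ → Prop) : Finset (ℕ × ℕ) :=
  (Finset.range (L + 1) ×ˢ Finset.range (L + 1)).filter
    (fun q => a * q.1 ^ 2 + b * q.2 ^ 2 = L ∧ C q.1 q.2)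

lemma mem_quadPts {a b L : ℕ} (ha : 0 < a) (hb : 0 < b) {C : ℕ → ℕ → Prop} (x y : ℕ) :
    (x, y) ∈ quadPts a b L C ↔ (a * x ^ 2 + b * y ^ 2 = L ∧ C x y) := by
  unfold quadPts
  simp only [Finset.mem_filter, Finset.mem_product, Finset.mem_range, and_iff_right_iff_imp]
  rintro ⟨h, -⟩
  have hx : x ≤ x ^ 2 := Nat.le_self_pow (by norm_num) x
  have hy : y ≤ y ^ 2 := Nat.le_self_pow (by norm_num) y
  constructor <;> nlinarith [Nat.zero_le (x ^ 2), Nat.zero_le (y ^ 2)]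

lemma sq_mod24 (x : ℕ) (h2 : x % 2 = 1) (h3 : ¬ 3 ∣ x) : ∃ i, x ^ 2 = 24 * i + 1 := by
  have : x % 24 < 24 := Nat.mod_lt _ (by norm_num)
  have hm : x ^ 2 % 24 = 1 := by
    have h2' : (x % 24) % 2 = 1 := by omega
    have h3' : (x % 24) % 3 ≠ 0 := by omega
    rw [Nat.pow_mod]
    interval_cases x % 24 <;> simp_all
  exact ⟨x ^ 2 / 24, by omega⟩

lemma sq_mod3 (x : ℕ) (h3 : ¬ 3 ∣ x) : ∃ i, x ^ 2 = 3 * i + 1 := by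
  have hm : x ^ 2 % 3 = 1 := by
    have : x % 3 = 1 ∨ x % 3 = 2 := by omega
    rw [Nat.pow_mod]
    rcases this with h | h <;> rw [h]
  exact ⟨x ^ 2 / 3, by omega⟩

lemma sq_mod3' (x : ℕ) : x ^ 2 % 3 = 0 ∧ 3 ∣ x ∨ x ^ 2 % 3 = 1 ∧ ¬ 3 ∣ x := by
  have : x % 3 = 0 ∨ x % 3 = 1 ∨ x % 3 = 2 := by omega
  rw [Nat.pow_mod]
  rcases this with h | h | h <;> rw [h]
  · left; omega
  · right; omega
  · right; omega

lemma sq_mod8 (x : ℕ) : x ^ 2 % 8 = 1 ∧ x % 2 = 1 ∨ x ^ 2 % 8 = 0 ∧ x % 4 = 0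
    ∨ x ^ 2 % 8 = 4 ∧ x % 4 = 2 := by
  have h8 : x % 8 < 8 := Nat.mod_lt _ (by norm_num)
  rw [Nat.pow_mod]
  have a : x % 2 = (x % 8) % 2 := by omega
  have b : x % 4 = (x % 8) % 4 := by omega
  rw [a, b]
  interval_cases x % 8 <;> simp

open Classical in
lemma coeff_serP (i : ℕ) : coeff i serP = if ∃ x : ℕ, x ^ 2 = 24 * i + 1 then 1 else 0 := by
  simp only [serP, coeff_mk]
  congr 1
  apply propext
  constructor
  · rintro ⟨r, hr⟩; exact ⟨r, by rw [hr]; ring⟩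
  · rintro ⟨r, hr⟩; exact ⟨r, by rw [← hr]; ring⟩

open Classical in
lemma coeff_serT (i : ℕ) : coeff i serT = if ∃ x : ℕ, x ^ 2 = 3 * i + 1 then 1 else 0 := by
  simp only [serT, coeff_mk]
  congr 1
  apply propext
  constructor
  · rintro ⟨r, hr⟩; exact ⟨r, by rw [hr]; ring⟩
  · rintro ⟨r, hr⟩; exact ⟨r, by rw [← hr]; ring⟩

open Classical in
lemma coeff_expand_serP (k : ℕ) (hk : k ≠ 0) (i : ℕ) : coeff i (expand k hk serP) =
    if ∃ x : ℕ, ∃ j, i = k * j ∧ x ^ 2 = 24 * j + 1 then 1 else 0 := by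
  rw [coeff_expand]
  by_cases h : k ∣ i
  · obtain ⟨j, rfl⟩ := h
    rw [if_pos (dvd_mul_right k j), Nat.mul_div_cancel_left _ (Nat.pos_of_ne_zero hk), coeff_serP]
    congr 1
    apply propext
    constructor
    · rintro ⟨x, hx⟩; exact ⟨x, j, rfl, hx⟩
    · rintro ⟨x, j', hj, hx⟩
      have := Nat.eq_of_mul_eq_mul_left (Nat.pos_of_ne_zero hk) hj
      subst this
      exact ⟨x, hx⟩
  · rw [if_neg h, if_neg]
    rintro ⟨x, j, rfl, -⟩
    exact h (dvd_mul_right k j)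

lemma sq_inj' {x x' : ℕ} (h : x ^ 2 = x' ^ 2) : x = x' := Nat.pow_left_injective (n := 2) (by norm_num) h

/-- product of `serP` with an expansion of it. -/
lemma coeff_P_expand (k : ℕ) (hk : k ≠ 0) (n : ℕ) (S : Finset (ℕ × ℕ))
    (hS : ∀ x y, (x, y) ∈ S ↔ ∃ i j, i + k * j = n ∧ x ^ 2 = 24 * i + 1 ∧ y ^ 2 = 24 * j + 1) :
    coeff n (serP * expand k hk serP) = (S.card : ZMod 2) := by
  classical
  refine coeff_mul_theta _ _ (fun x i => x ^ 2 = 24 * i + 1)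
    (fun x i => ∃ j, i = k * j ∧ x ^ 2 = 24 * j + 1) ?_ ?_ ?_ ?_ ?_ ?_ n S ?_
  · intro i; rw [coeff_serP]
  · intro i; rw [coeff_expand_serP]
  · intro x i i' h h'; omega
  · intro x x' i h h'; exact sq_inj' (h.trans h'.symm)
  · rintro x i i' ⟨j, rfl, h⟩ ⟨j', rfl, h'⟩
    have : j = j' := by omega
    rw [this]
  · rintro x x' i ⟨j, rfl, h⟩ ⟨j', hj, h'⟩
    have := Nat.eq_of_mul_eq_mul_left (Nat.pos_of_ne_zero hk) hj
    subst this
    exact sq_inj' (h.trans h'.symm)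
  · intro x y
    rw [hS]
    constructor
    · rintro ⟨i, j, h, hx, hy⟩; exact ⟨i, k * j, h, hx, j, rfl, hy⟩
    · rintro ⟨i, _, h, hx, j, rfl, hy⟩; exact ⟨i, j, h, hx, hy⟩

lemma coeff_cube (m : ℕ) : coeff m (serP * expand 2 (by norm_num) serP) =
    if IsSquare (8 * m + 1) then 1 else 0 := by
  classical
  set S := quadPts 1 2 (24 * m + 3) (fun x _ => ¬ 3 ∣ x) with hSd
  rw [coeff_P_expand 2 (by norm_num) m S]
  · rw [count_two (24 * m + 3) (by omega) (by omega) S]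
    · have h1 : (24 * m + 3) / 3 = 8 * m + 1 := by omega
      rw [h1, if_neg (c := 9 ∣ 24 * m + 3 ∧ IsSquare ((24 * m + 3) / 9)), add_zero]
      rintro ⟨h9, r, hr⟩
      have := sq_mod8 r
      rw [pow_two, ← hr] at this
      omega
    · intro x w
      rw [hSd, mem_quadPts (by norm_num) (by norm_num), one_mul]
  · intro x y
    rw [hSd, mem_quadPts (by norm_num) (by norm_num), one_mul]
    constructor
    · rintro ⟨h, h3⟩
      have a1 := sq_mod8 x
      have a2 := sq_mod8 y
      have a3 := sq_mod3' y
      have a4 := sq_mod3' x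
      obtain ⟨i, hi⟩ := sq_mod24 x (by omega) h3
      obtain ⟨j, hj⟩ := sq_mod24 y (by omega) (by omega)
      exact ⟨i, j, by omega, hi, hj⟩
    · rintro ⟨i, j, h, hx, hy⟩
      have a4 := sq_mod3' x
      refine ⟨by omega, by omega⟩

lemma coeff_PT (N : ℕ) : coeff N (serP * serT) =
    if 3 ∣ N ∧ IsSquare (8 * (N / 3) + 1) then 1 else 0 := by
  classical
  set S := quadPts 1 8 (24 * N + 9) (fun x _ => ¬ 3 ∣ x) with hSd
  set S' := quadPts 1 2 (24 * N + 9) (fun x _ => ¬ 3 ∣ x) with hSd'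
  have hcard : S.card = S'.card := by
    refine Finset.card_bij (fun q _ => (q.1, 2 * q.2)) ?_ ?_ ?_
    · rintro ⟨x, k⟩ h
      rw [hSd, mem_quadPts (by norm_num) (by norm_num)] at h
      rw [hSd', mem_quadPts (by norm_num) (by norm_num)]
      refine ⟨?_, h.2⟩
      rw [← h.1]; ring
    · rintro ⟨x, k⟩ h ⟨x', k'⟩ h' heq
      simp only [Prod.mk.injEq] at heq ⊢
      omega
    · rintro ⟨x, w⟩ h
      rw [hSd', mem_quadPts (by norm_num) (by norm_num)] at h
      have a1 := sq_mod8 x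
      have a2 := sq_mod8 w
      obtain ⟨k, rfl⟩ : ∃ k, w = 2 * k := ⟨w / 2, by omega⟩
      refine ⟨(x, k), ?_, rfl⟩
      rw [hSd, mem_quadPts (by norm_num) (by norm_num)]
      refine ⟨?_, h.2⟩
      rw [← h.1]; ring
  rw [coeff_mul_theta serP serT (fun x i => x ^ 2 = 24 * i + 1) (fun x i => x ^ 2 = 3 * i + 1)
    (fun i => by rw [coeff_serP]) (fun i => by rw [coeff_serT])
    (fun x i i' h h' => by omega) (fun x x' i h h' => sq_inj' (h.trans h'.symm))
    (fun x i i' h h' => by omega) (fun x x' i h h' => sq_inj' (h.trans h'.symm)) N S]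
  · rw [hcard, count_two (24 * N + 9) (by omega) (by omega) S']
    · rw [if_neg (c := IsSquare ((24 * N + 9) / 3)), zero_add]
      · congr 1
        apply propext
        constructor
        · rintro ⟨h9, hs⟩
          refine ⟨by omega, ?_⟩
          have : (24 * N + 9) / 9 = 8 * (N / 3) + 1 := by omega
          rwa [← this]
        · rintro ⟨h9, hs⟩
          refine ⟨by omega, ?_⟩
          have : (24 * N + 9) / 9 = 8 * (N / 3) + 1 := by omega
          rwa [this]
      · rintro ⟨r, hr⟩
        have := sq_mod8 r
        rw [pow_two, ← hr] at this
        omega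
    · intro x w
      rw [hSd', mem_quadPts (by norm_num) (by norm_num), one_mul]
  · intro x y
    rw [hSd, mem_quadPts (by norm_num) (by norm_num), one_mul]
    constructor
    · rintro ⟨h, h3⟩
      have a1 := sq_mod8 x
      have a3 := sq_mod3' y
      have a4 := sq_mod3' x
      obtain ⟨i, hi⟩ := sq_mod24 x (by omega) h3
      obtain ⟨j, hj⟩ := sq_mod3 y (by omega)
      exact ⟨i, j, by omega, hi, hj⟩
    · rintro ⟨i, j, h, hx, hy⟩
      have a4 := sq_mod3' x
      refine ⟨by omega, by omega⟩

lemma PT_eq : serP * serT = expand 3 (by norm_num) (serP ^ 3) := by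
  have : serP ^ 3 = serP * expand 2 (by norm_num) serP := by
    rw [← sq_eq_expand]; ring
  rw [this]
  ext N
  rw [coeff_PT, coeff_expand]
  by_cases h : 3 ∣ N
  · rw [if_pos h, coeff_cube]
    simp only [h, true_and]
  · rw [if_neg h, if_neg (by tauto)]

lemma coeff_W0 (n : ℕ) : coeff (4 * n) (serP * expand 7 (by norm_num) serP) =
    if IsSquare (12 * n + 1) then 1 else 0 := by
  classical
  set S := quadPts 1 7 (8 * (12 * n + 1)) (fun _ _ => True) with hSd
  rw [coeff_P_expand 7 (by norm_num) (4 * n) S]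
  · rw [count_seven_a (12 * n + 1) (by omega) S]
    intro x w
    rw [hSd, mem_quadPts (by norm_num) (by norm_num), one_mul, and_true]
  · intro x y
    rw [hSd, mem_quadPts (by norm_num) (by norm_num), one_mul, and_true]
    constructor
    · intro h
      have a3 := sq_mod3' y
      have a4 := sq_mod3' x
      have hpar : x % 2 = 1 ∧ y % 2 = 1 := by
        have a1 := sq_mod8 x
        have a2 := sq_mod8 y
        by_contra hcon
        have hx : x % 2 = 0 := by omega
        have hy : y % 2 = 0 := by omega
        obtain ⟨s, rfl⟩ : ∃ s, x = 2 * s := ⟨x / 2, by omega⟩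
        obtain ⟨t, rfl⟩ : ∃ t, y = 2 * t := ⟨y / 2, by omega⟩
        have h' : s ^ 2 + 7 * t ^ 2 = 2 * (12 * n + 1) := by linarith
        have b1 := sq_mod8 s
        have b2 := sq_mod8 t
        omega
      obtain ⟨i, hi⟩ := sq_mod24 x (by omega) (by omega)
      obtain ⟨j, hj⟩ := sq_mod24 y (by omega) (by omega)
      exact ⟨i, j, by omega, hi, hj⟩
    · rintro ⟨i, j, h, hx, hy⟩
      omega

lemma coeff_W3 (t : ℕ) : coeff (4 * t + 3) (serP * expand 7 (by norm_num) serP) = 0 := by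
  classical
  set S := quadPts 1 7 (16 * (6 * t + 5)) (fun x y => x % 2 = 1 ∧ y % 2 = 1) with hSd
  rw [coeff_P_expand 7 (by norm_num) (4 * t + 3) S]
  · rw [count_seven_b (6 * t + 5) (by omega) S]
    intro x w
    rw [hSd, mem_quadPts (by norm_num) (by norm_num), one_mul]
  · intro x y
    rw [hSd, mem_quadPts (by norm_num) (by norm_num), one_mul]
    constructor
    · rintro ⟨h, hx, hy⟩
      have a3 := sq_mod3' y
      have a4 := sq_mod3' x
      obtain ⟨i, hi⟩ := sq_mod24 x (by omega) (by omega)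
      obtain ⟨j, hj⟩ := sq_mod24 y (by omega) (by omega)
      exact ⟨i, j, by omega, hi, hj⟩
    · rintro ⟨i, j, h, hx, hy⟩
      have a1 := sq_mod8 x
      have a2 := sq_mod8 y
      omega

end

section
open PowerSeries

lemma sect_mul_expand (r : ℕ) (hr : r < 4) (F G : PowerSeries (ZMod 2)) :
    sect r (F * expand 4 (by norm_num) G) = sect r F * G := by
  classical
  ext n
  simp only [sect, coeff_mk, coeff_mul]
  symm
  refine Finset.sum_of_injOn (fun q => (4 * q.1 + r, 4 * q.2)) ?_ ?_ ?_ ?_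
  · rintro ⟨a, b⟩ _ ⟨c, d⟩ _ h
    simp only [Prod.mk.injEq] at h ⊢
    omega
  · rintro ⟨a, b⟩ h
    simp only [Finset.mem_coe, Finset.HasAntidiagonal.mem_antidiagonal] at h ⊢
    omega
  · rintro ⟨i, j⟩ h hn
    simp only [Finset.HasAntidiagonal.mem_antidiagonal] at h
    rw [coeff_expand, if_neg, mul_zero]
    rintro ⟨j', rfl⟩
    apply hn
    refine ⟨(n - j', j'), ?_, ?_⟩
    · simp only [Finset.mem_coe, Finset.HasAntidiagonal.mem_antidiagonal]
      omega
    · have hi : 4 * (n - j') + r = i := by omega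
      exact Prod.ext hi rfl
  · rintro ⟨a, b⟩ _
    simp only
    rw [coeff_expand, if_pos (dvd_mul_right 4 b), Nat.mul_div_cancel_left _ (by norm_num)]

lemma sect_add (r : ℕ) (F G : PowerSeries (ZMod 2)) : sect r (F + G) = sect r F + sect r G := by
  ext n; simp [sect]

lemma sect_X_mul (F : PowerSeries (ZMod 2)) : sect 1 (X * F) = sect 0 F := by
  ext n
  simp only [sect, coeff_mk, coeff_succ_X_mul, add_zero]

lemma serT_split : serT = expand 4 (by norm_num) (sect 0 serT) + X * expand 4 (by norm_num) serT := by
  ext n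
  rw [map_add]
  obtain ⟨m, hm⟩ : ∃ m, n = 4 * m ∨ n = 4 * m + 1 ∨ n = 4 * m + 2 ∨ n = 4 * m + 3 :=
    ⟨n / 4, by omega⟩
  rcases hm with rfl | rfl | rfl | rfl
  · rw [coeff_expand, if_pos (dvd_mul_right 4 m), Nat.mul_div_cancel_left _ (by norm_num)]
    have : coeff (4 * m) (X * expand 4 (by norm_num) serT) = 0 := by
      rcases m with _ | m
      · simp
      · rw [show 4 * (m + 1) = (4 * m + 3) + 1 by ring, coeff_succ_X_mul, coeff_expand, if_neg]
        omega
    rw [this, add_zero]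
    simp [sect]
  · rw [coeff_expand, if_neg (by omega), zero_add, coeff_succ_X_mul, coeff_expand,
      if_pos (dvd_mul_right 4 m), Nat.mul_div_cancel_left _ (by norm_num), coeff_serT, coeff_serT]
    congr 1
    apply propext
    constructor
    · rintro ⟨x, hx⟩
      have := sq_mod8 x
      obtain ⟨y, rfl⟩ : ∃ y, x = 2 * y := ⟨x / 2, by omega⟩
      exact ⟨y, by rw [mul_pow] at hx; omega⟩
    · rintro ⟨y, hy⟩
      exact ⟨2 * y, by rw [mul_pow]; omega⟩
  · rw [coeff_expand, if_neg (by omega), zero_add, coeff_succ_X_mul, coeff_expand,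
      if_neg (by omega), coeff_serT, if_neg]
    rintro ⟨x, hx⟩
    have := sq_mod8 x
    omega
  · rw [coeff_expand, if_neg (by omega), zero_add,
      show 4 * m + 3 = (4 * m + 2) + 1 by ring, coeff_succ_X_mul, coeff_expand,
      if_neg (by omega), coeff_serT, if_neg]
    rintro ⟨x, hx⟩
    have := sq_mod8 x
    omega

/-- `serP * expand 7 serP`. -/
noncomputable def serW : PowerSeries (ZMod 2) := serP * expand 7 (by norm_num) serP

lemma sect1_W : sect 1 (expand 3 (by norm_num) serW) = 0 := by
  ext n
  simp only [sect, coeff_mk, map_zero]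
  rw [coeff_expand]
  split_ifs with h
  · obtain ⟨t, ht⟩ : ∃ t, (4 * n + 1) / 3 = 4 * t + 3 := ⟨(4 * n + 1) / 3 / 4, by omega⟩
    rw [ht]
    exact coeff_W3 t
  · rfl

lemma sect0_W : sect 0 (expand 3 (by norm_num) serW) = (expand 3 (by norm_num) serP) ^ 2 := by
  rw [← map_pow]
  ext n
  simp only [sect, coeff_mk, add_zero]
  rw [coeff_expand, coeff_expand]
  by_cases h : 3 ∣ n
  · obtain ⟨m, rfl⟩ := h
    rw [if_pos (by omega), if_pos (by omega), show 4 * (3 * m) / 3 = 4 * m by omega,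
      show 3 * m / 3 = m by omega, sq_eq_expand, coeff_expand_serP]
    refine (coeff_W0 m).trans ?_
    congr 1
    apply propext
    constructor
    · rintro ⟨x, hx⟩
      have h8 := sq_mod8 x
      rw [← pow_two] at hx
      exact ⟨x, m / 2, by omega, by omega⟩
    · rintro ⟨x, j, rfl, hx⟩
      exact ⟨x, by rw [← pow_two]; omega⟩
  · rw [if_neg (by omega), if_neg h]

lemma serP3_ne : expand 3 (by norm_num) serP ≠ (0 : PowerSeries (ZMod 2)) := by
  intro h
  have h0 := congrArg (coeff 0) h
  rw [coeff_expand_serP, if_pos ⟨1, 0, by norm_num⟩] at h0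
  simp at h0

lemma serB_eq : serB * expand 4 (by norm_num) (expand 3 (by norm_num) serP) =
    serT * expand 3 (by norm_num) serW := by
  have h4 : expand 4 (by norm_num) (expand 3 (by norm_num) serP) =
      (expand 3 (by norm_num) serP) ^ 4 := by
    have e4 : (expand 3 (by norm_num) serP) ^ 4 = ((expand 3 (by norm_num) serP) ^ 2) ^ 2 := by
      ring
    rw [e4, sq_eq_expand, sq_eq_expand, ← expand_mul, ← expand_mul, ← expand_mul]
  have hW : expand 3 (by norm_num) serW =
      expand 3 (by norm_num) serP * expand 21 (by norm_num) serP := by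
    rw [serW, map_mul, ← expand_mul]
  have h1 := serB_mul
  have h2 := PT_eq
  rw [map_pow] at h2
  rw [h4, hW, ← h1]
  linear_combination (-serB * expand 3 (by norm_num) serP) * h2

lemma sect1_serB : sect 1 serB = serT * expand 3 (by norm_num) serP := by
  have h := congrArg (sect 1) serB_eq
  rw [sect_mul_expand 1 (by norm_num)] at h
  have h2 : sect 1 (serT * expand 3 (by norm_num) serW) =
      serT * (expand 3 (by norm_num) serP) ^ 2 := by
    conv_lhs => rw [serT_split]
    rw [add_mul, sect_add, mul_comm (expand 4 _ (sect 0 serT)), sect_mul_expand 1 (by norm_num),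
      sect1_W, zero_mul, zero_add, mul_assoc, sect_X_mul, mul_comm (expand 4 _ serT),
      sect_mul_expand 0 (by norm_num), sect0_W, mul_comm]
  rw [h2] at h
  refine mul_right_cancel₀ serP3_ne ?_
  rw [h]; ring

lemma b21_eq_card (n : ℕ) : (b21 (4 * n + 1) : ZMod 2) =
    ((quadPts 8 3 (24 * n + 11) (fun _ y => ¬ 3 ∣ y)).card : ZMod 2) := by
  classical
  have h := congrArg (coeff n) sect1_serB
  simp only [sect, serB, coeff_mk] at h
  rw [h]
  refine coeff_mul_theta _ _ (fun x i => x ^ 2 = 3 * i + 1)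
    (fun x i => ∃ j, i = 3 * j ∧ x ^ 2 = 24 * j + 1) ?_ ?_ ?_ ?_ ?_ ?_ n _ ?_
  · intro i; rw [coeff_serT]
  · intro i; rw [coeff_expand_serP]
  · intro x i i' h h'; omega
  · intro x x' i h h'; exact sq_inj' (h.trans h'.symm)
  · rintro x i i' ⟨j, rfl, h⟩ ⟨j', rfl, h'⟩
    omega
  · rintro x x' i ⟨j, rfl, h⟩ ⟨j', h0, h'⟩
    exact sq_inj' (by omega)
  · intro x y
    rw [mem_quadPts (by norm_num) (by norm_num)]
    have a1 := sq_mod3' x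
    have a2 := sq_mod3' y
    have a3 := sq_mod8 y
    constructor
    · rintro ⟨h, h3⟩
      obtain ⟨j, hj⟩ := sq_mod24 y (by omega) h3
      obtain ⟨i, hi⟩ := sq_mod3 x (by omega)
      exact ⟨i, 3 * j, by omega, hi, j, rfl, hj⟩
    · rintro ⟨i, _, hs, hi, j, rfl, hj⟩
      exact ⟨by omega, by omega⟩

end

lemma odd_b21_iff (p : ℕ) (hp : p.Prime) (hp5 : 5 ≤ p) (hp11 : p ≠ 11) (j : ℕ) :
    Odd (b21 ((11 * p ^ (2 * j) - 5) / 6)) ↔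
      Odd ((ellPts 24 (p ^ (2 * j))).filter (fun q => ¬ (3:ℤ) ∣ q.1 + q.2)).card := by
  classical
  have h2 : ¬ 2 ∣ p ^ j := fun h => by
    have := (Nat.prime_dvd_prime_iff_eq Nat.prime_two hp).1 (Nat.prime_two.dvd_of_dvd_pow h)
    omega
  have h3 : ¬ 3 ∣ p ^ j := fun h => by
    have := (Nat.prime_dvd_prime_iff_eq Nat.prime_three hp).1 (Nat.prime_three.dvd_of_dvd_pow h)
    omega
  obtain ⟨m, hm⟩ := sq_mod24 (p ^ j) (by omega) h3
  have hm' : p ^ (2 * j) = 24 * m + 1 := by rw [← hm, ← pow_mul, mul_comm]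
  have hn : (11 * p ^ (2 * j) - 5) / 6 = 4 * (11 * m) + 1 := by omega
  have hc := count_eleven p hp hp5 hp11 j (quadPts 8 3 (24 * (11 * m) + 11) (fun _ y => ¬ 3 ∣ y))
    (by
      intro k y
      rw [mem_quadPts (by norm_num) (by norm_num), hm',
        show 24 * (11 * m) + 11 = 11 * (24 * m + 1) by ring])
  rw [← hc, hn, ← ZMod.natCast_eq_one_iff_odd, ← ZMod.natCast_eq_one_iff_odd, b21_eq_card]

theorem stmt_2 (p : ℕ) (hp : p.Prime) (hp5 : 5 ≤ p) (hp11 : p ≠ 11)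
    (h : Odd (b21 ((11 * p ^ 2 - 5) / 6))) (k : ℕ) :
    Odd (b21 ((11 * p ^ (4 * k) - 5) / 6)) := by
  have h1 := (odd_b21_iff p hp hp5 hp11 1).1 h
  have h2 := (odd_b21_iff p hp hp5 hp11 (2 * k)).2 (arith_main p hp hp5 h1 (2 * k))
  rwa [← mul_assoc] at h2
end

section
/- Let p ≥ 5 be a prime with p ≠ 11. If b₂₁((11p^2 − 5)/6) is even, then for all integers n, k ≥ 0 with p not dividing 24n + 11, one has b₂₁(4p^{6k+2} n + (11p^{6k+2} − 5)/6) ≡ 0 (mod 2). -/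
lemma card_invol {α : Type*} [DecidableEq α] (s : Finset α) (σ : α → α)
    (h1 : ∀ x ∈ s, σ x ∈ s) (h2 : ∀ x ∈ s, σ (σ x) = x) :
    (s.card : ZMod 2) = ((s.filter fun x => σ x = x).card : ZMod 2) := by
  have h := Finset.card_filter_add_card_filter_not (s := s) (fun x => σ x = x)
  have h0 : (((s.filter fun x => ¬ σ x = x).card : ℕ) : ZMod 2) = 0 := by
    rw [Finset.cast_card]
    refine Finset.sum_involution (fun x _ => σ x) ?_ ?_ ?_ ?_
    · intros; decide
    · intro a ha _
      exact (Finset.mem_filter.1 ha).2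
    · intro a ha
      rw [Finset.mem_filter] at ha ⊢
      refine ⟨h1 a ha.1, ?_⟩
      rw [h2 a ha.1]
      exact fun h => ha.2 h.symm
    · intro a ha
      exact h2 a (Finset.mem_filter.1 ha).1
  rw [← h]; push_cast; rw [h0, add_zero]

/-- positive solutions of `w² + 2 x² = M` with `3 ∤ w` -/
def G (M : ℕ) : Finset (ℕ × ℕ) :=
  ((Finset.range (M + 1)) ×ˢ (Finset.range (M + 1))).filter
    fun a => 0 < a.1 ∧ 0 < a.2 ∧ a.1 ^ 2 + 2 * a.2 ^ 2 = M ∧ ¬ 3 ∣ a.1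

lemma mem_G {M w x : ℕ} :
    (w, x) ∈ G M ↔ 0 < w ∧ 0 < x ∧ w ^ 2 + 2 * x ^ 2 = M ∧ ¬ 3 ∣ w := by
  simp only [G, Finset.mem_filter, Finset.mem_product, Finset.mem_range]
  constructor
  · exact fun h => h.2
  · intro h
    refine ⟨⟨?_, ?_⟩, h⟩ <;> nlinarith [h.2.2.1, h.1, h.2.1]

def sg (a : ℕ × ℕ) : ℕ × ℕ :=
  if 3 ∣ (a.1 : ℤ) - a.2 then (((a.1 : ℤ) - 4 * a.2).natAbs / 3, (2 * a.1 + a.2) / 3)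
  else ((a.1 + 4 * a.2) / 3, (2 * (a.1 : ℤ) - a.2).natAbs / 3)

lemma sq_mod3_s3 (w : ℕ) (h : ¬ 3 ∣ w) : w ^ 2 % 3 = 1 := by
  have : w % 3 = 1 ∨ w % 3 = 2 := by omega
  rcases this with h | h <;> simp [Nat.pow_mod, h]

lemma sq_mod3'_s3 (w : ℕ) (h : w ^ 2 % 3 = 1) : ¬ 3 ∣ w := by
  rintro ⟨k, rfl⟩
  have : (3 * k) ^ 2 = 3 * (3 * k ^ 2) := by ring
  omega

lemma pm3 (w x : ℕ) (hw : ¬ 3 ∣ w) (hx : ¬ 3 ∣ x) :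
    ((3 ∣ (w : ℤ) - x) ∧ ¬ 3 ∣ (w : ℤ) + x) ∨ ((¬ 3 ∣ (w : ℤ) - x) ∧ 3 ∣ (w : ℤ) + x) := by
  have h1 : w % 3 = 1 ∨ w % 3 = 2 := by omega
  have h2 : x % 3 = 1 ∨ x % 3 = 2 := by omega
  rcases h1 with h1 | h1 <;> rcases h2 with h2 | h2 <;> omega

lemma G_base (L : ℕ) (hL : L % 2 = 1) (h3 : ¬ 3 ∣ L) :
    ((G (3 * L)).card : ZMod 2) = if IsSquare L then 1 else 0 := by
  have key : ∀ w x : ℕ, (w, x) ∈ G (3 * L) → ¬ 3 ∣ x := by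
    intro w x h hx
    rw [mem_G] at h
    have := sq_mod3_s3 w h.2.2.2
    obtain ⟨k, rfl⟩ := hx
    have e : (3 * k) ^ 2 = 3 * (3 * k ^ 2) := by ring
    omega
  have h1 : ∀ a ∈ G (3 * L), sg a ∈ G (3 * L) ∧ sg (sg a) = a := by
    rintro ⟨w, x⟩ h
    have hx := key w x h
    rw [mem_G] at h
    obtain ⟨hw0, hx0, e, hw⟩ := h
    have hpm := pm3 w x hw hx
    have h4 : w ≠ 4 * x := by
      rintro rfl
      have : (4 * x) ^ 2 + 2 * x ^ 2 = 2 * (9 * x ^ 2) := by ring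
      omega
    have h5 : x ≠ 2 * w := by
      rintro rfl
      have : w ^ 2 + 2 * (2 * w) ^ 2 = 3 * (3 * w ^ 2) := by ring
      omega
    have key2 : ∃ w' x' : ℕ, sg (w, x) = (w', x') ∧ 0 < w' ∧ 0 < x' ∧
        w' ^ 2 + 2 * x' ^ 2 = 3 * L ∧ (((3 ∣ (w : ℤ) - x) ∧ 3 * x' = 2 * w + x ∧ 
          (3 * (w' : ℤ) = w - 4 * x ∨ 3 * (w' : ℤ) = 4 * x - w)) ∨ 
          ((¬ 3 ∣ (w : ℤ) - x) ∧ 3 * w' = w + 4 * x ∧ 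
          (3 * (x' : ℤ) = 2 * w - x ∨ 3 * (x' : ℤ) = x - 2 * w))) := by
      by_cases hd : 3 ∣ (w : ℤ) - x
      · refine ⟨_, _, by simp only [sg]; rw [if_pos hd], ?_⟩
        generalize e1 : ((w : ℤ) - 4 * x).natAbs / 3 = w'
        generalize e2 : (2 * w + x) / 3 = x'
        have e3 : 3 * x' = 2 * w + x := by omega
        have e4 : 3 * (w' : ℤ) = w - 4 * x ∨ 3 * (w' : ℤ) = 4 * x - w := by omega
        have e5 : w' ^ 2 + 2 * x' ^ 2 = 3 * L := by
          zify at e3 e ⊢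
          rcases e4 with e4 | e4 <;> nlinarith
        refine ⟨by omega, by omega, e5, Or.inl ⟨hd, e3, e4⟩⟩
      · refine ⟨_, _, by simp only [sg]; rw [if_neg hd], ?_⟩
        generalize e1 : (w + 4 * x) / 3 = w'
        generalize e2 : (2 * (w : ℤ) - x).natAbs / 3 = x'
        have e3 : 3 * w' = w + 4 * x := by omega
        have e4 : 3 * (x' : ℤ) = 2 * w - x ∨ 3 * (x' : ℤ) = x - 2 * w := by omega
        have e5 : w' ^ 2 + 2 * x' ^ 2 = 3 * L := by
          zify at e3 e ⊢
          rcases e4 with e4 | e4 <;> nlinarith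
        refine ⟨by omega, by omega, e5, Or.inr ⟨hd, e3, e4⟩⟩
    obtain ⟨w', x', hs, hw', hx', e', hc⟩ := key2
    have hw3 : ¬ 3 ∣ w' := by
      intro hd
      have : 3 ∣ x' := by
        by_contra hh
        have h4 := sq_mod3_s3 x' hh
        obtain ⟨k, rfl⟩ := hd
        have : (3 * k) ^ 2 = 3 * (3 * k ^ 2) := by ring
        omega
      obtain ⟨k, rfl⟩ := hd
      obtain ⟨l, rfl⟩ := this
      apply h3
      have : (3 * k) ^ 2 + 2 * (3 * l) ^ 2 = 9 * (k ^ 2 + 2 * l ^ 2) := by ring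
      omega
    have hpm2 := pm3 w' x' hw3 (key w' x' (mem_G.2 ⟨hw', hx', e', hw3⟩))
    rw [hs]
    refine ⟨mem_G.2 ⟨hw', hx', e', hw3⟩, ?_⟩
    simp only [sg]
    split_ifs <;> ext <;> simp only <;> omega
  rw [card_invol _ sg (fun a ha => (h1 a ha).1) (fun a ha => (h1 a ha).2)]
  have hfix : ∀ w x : ℕ, (w, x) ∈ G (3 * L) → (sg (w, x) = (w, x) ↔ w = x) := by
    intro w x h
    have hx := key w x h
    rw [mem_G] at h
    obtain ⟨hw0, hx0, e, hw⟩ := h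
    have h2 : w ≠ 2 * x := by
      rintro rfl
      have : (2 * x) ^ 2 + 2 * x ^ 2 = 2 * (3 * x ^ 2) := by ring
      omega
    have hpm := pm3 w x hw hx
    simp only [sg]
    split_ifs <;> simp only [Prod.mk.injEq] <;> omega
  split_ifs with hsq
  · obtain ⟨r, hr⟩ := hsq
    have : (G (3 * L)).filter (fun x => sg x = x) = {(r, r)} := by
      ext ⟨w, x⟩
      rw [Finset.mem_filter, Finset.mem_singleton]
      constructor
      · rintro ⟨h, h'⟩
        have := (hfix w x h).1 h'
        subst this
        rw [mem_G] at h
        have : w = r := by nlinarith [h.2.2.1]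
        rw [this]
      · intro hwx
        rw [Prod.mk.injEq] at hwx
        obtain ⟨hw1, rfl⟩ := hwx
        subst hw1
        have hm : (w, w) ∈ G (3 * L) := by
          have hw : w ≠ 0 := by rintro rfl; omega
          refine mem_G.2 ⟨by omega, by omega, by rw [hr]; ring, ?_⟩
          intro hd
          exact h3 (hr ▸ Dvd.dvd.mul_left hd w)
        exact ⟨hm, (hfix w w hm).2 rfl⟩
    rw [this]; simp
  · have : (G (3 * L)).filter (fun x => sg x = x) = ∅ := by
      ext ⟨w, x⟩
      rw [Finset.mem_filter]
      simp only [Finset.notMem_empty, iff_false]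
      rintro ⟨h, h'⟩
      have := (hfix w x h).1 h'
      subst this
      rw [mem_G] at h
      exact hsq ⟨w, by nlinarith [h.2.2.1]⟩
    rw [this]; simp

def g1 (a : ℕ × ℕ) : ℕ × ℕ :=
  if 3 ∣ (a.1 : ℤ) - a.2 then ((a.1 + 2 * a.2) / 3, ((a.1 : ℤ) - a.2).natAbs / 3)
  else (((a.1 : ℤ) - 2 * a.2).natAbs / 3, (a.1 + a.2) / 3)

def g2 (a : ℕ × ℕ) : ℕ × ℕ :=
  if 3 ∣ (a.1 : ℤ) - a.2 then (((a.1 : ℤ) - 2 * a.2).natAbs, a.1 + a.2)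
  else (a.1 + 2 * a.2, ((a.1 : ℤ) - a.2).natAbs)

lemma G_step (L : ℕ) (hL : L % 2 = 1) (h3 : 3 ∣ L) :
    (G (3 * L)).card = (G L).card := by
  have key : ∀ M w x : ℕ, 3 ∣ M → (w, x) ∈ G M → ¬ 3 ∣ x := by
    intro M w x hM h hx
    rw [mem_G] at h
    have := sq_mod3_s3 w h.2.2.2
    obtain ⟨k, rfl⟩ := hx
    have e : (3 * k) ^ 2 = 3 * (3 * k ^ 2) := by ring
    omega
  have h1 : ∀ a ∈ G (3 * L), g1 a ∈ G L ∧ g2 (g1 a) = a := by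
    rintro ⟨w, x⟩ h
    have hx := key _ w x ⟨L, rfl⟩ h
    rw [mem_G] at h
    obtain ⟨hw0, hx0, e, hw⟩ := h
    have hne : w ≠ x := by
      rintro rfl
      have : L = w ^ 2 := by omega
      have := sq_mod3_s3 w hw
      omega
    have h2 : w ≠ 2 * x := by
      rintro rfl
      have : (2 * x) ^ 2 + 2 * x ^ 2 = 2 * (3 * x ^ 2) := by ring
      omega
    have hpm := pm3 w x hw hx
    have key2 : ∃ w' x' : ℕ, g1 (w, x) = (w', x') ∧ 0 < w' ∧ 0 < x' ∧
        w' ^ 2 + 2 * x' ^ 2 = L ∧ (((3 ∣ (w : ℤ) - x) ∧ 3 * w' = w + 2 * x ∧ 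
          (3 * (x' : ℤ) = w - x ∨ 3 * (x' : ℤ) = x - w)) ∨ 
          ((¬ 3 ∣ (w : ℤ) - x) ∧ 3 * x' = w + x ∧ 
          (3 * (w' : ℤ) = w - 2 * x ∨ 3 * (w' : ℤ) = 2 * x - w))) := by
      by_cases hd : 3 ∣ (w : ℤ) - x
      · refine ⟨_, _, by simp only [g1]; rw [if_pos hd], ?_⟩
        generalize e1 : (w + 2 * x) / 3 = w'
        generalize e2 : ((w : ℤ) - x).natAbs / 3 = x'
        have e3 : 3 * w' = w + 2 * x := by omega
        have e4 : 3 * (x' : ℤ) = w - x ∨ 3 * (x' : ℤ) = x - w := by omega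
        have e5 : w' ^ 2 + 2 * x' ^ 2 = L := by
          zify at e3 e ⊢
          rcases e4 with e4 | e4 <;> nlinarith
        refine ⟨by omega, by omega, e5, Or.inl ⟨hd, by omega, e4⟩⟩
      · refine ⟨_, _, by simp only [g1]; rw [if_neg hd], ?_⟩
        generalize e1 : (w + x) / 3 = x'
        generalize e2 : ((w : ℤ) - 2 * x).natAbs / 3 = w'
        have e3 : 3 * x' = w + x := by omega
        have e4 : 3 * (w' : ℤ) = w - 2 * x ∨ 3 * (w' : ℤ) = 2 * x - w := by omega
        have e5 : w' ^ 2 + 2 * x' ^ 2 = L := by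
          zify at e3 e ⊢
          rcases e4 with e4 | e4 <;> nlinarith
        refine ⟨by omega, by omega, e5, Or.inr ⟨hd, by omega, e4⟩⟩
    obtain ⟨w', x', hs, hw', hx', e', hc⟩ := key2
    have hw3 : ¬ 3 ∣ w' := by
      intro hd
      have : 3 ∣ x' := by
        by_contra hh
        have h4 := sq_mod3_s3 x' hh
        obtain ⟨k, rfl⟩ := hd
        have : (3 * k) ^ 2 = 3 * (3 * k ^ 2) := by ring
        omega
      omega
    have hx3 := key L w' x' h3 (mem_G.2 ⟨hw', hx', e', hw3⟩)
    have hpm2 := pm3 w' x' hw3 (key _ w' x' (by omega) (mem_G.2 ⟨hw', hx', e', hw3⟩))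
    rw [hs]
    refine ⟨mem_G.2 ⟨hw', hx', e', hw3⟩, ?_⟩
    simp only [g2]
    split_ifs <;> ext <;> simp only <;> omega
  have h2 : ∀ a ∈ G L, g2 a ∈ G (3 * L) ∧ g1 (g2 a) = a := by
    rintro ⟨w, x⟩ h
    have hx := key _ w x h3 h
    rw [mem_G] at h
    obtain ⟨hw0, hx0, e, hw⟩ := h
    have h2 : w ≠ 2 * x := by
      rintro rfl
      have : (2 * x) ^ 2 + 2 * x ^ 2 = 2 * (3 * x ^ 2) := by ring
      omega
    have hpm := pm3 w x hw hx
    have key2 : ∃ w' x' : ℕ, g2 (w, x) = (w', x') ∧ 0 < w' ∧ 0 < x' ∧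
        w' ^ 2 + 2 * x' ^ 2 = 3 * L ∧ (((3 ∣ (w : ℤ) - x) ∧ x' = w + x ∧ 
          ((w' : ℤ) = w - 2 * x ∨ (w' : ℤ) = 2 * x - w)) ∨ 
          ((¬ 3 ∣ (w : ℤ) - x) ∧ w' = w + 2 * x ∧ 
          ((x' : ℤ) = w - x ∨ (x' : ℤ) = x - w))) := by
      by_cases hd : 3 ∣ (w : ℤ) - x
      · refine ⟨_, _, by simp only [g2]; rw [if_pos hd], ?_⟩
        generalize e1 : (w + x) = x'
        generalize e2 : ((w : ℤ) - 2 * x).natAbs = w'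
        have e3 : x' = w + x := by omega
        have e4 : (w' : ℤ) = w - 2 * x ∨ (w' : ℤ) = 2 * x - w := by omega
        have e5 : w' ^ 2 + 2 * x' ^ 2 = 3 * L := by
          zify at e3 e ⊢
          rcases e4 with e4 | e4 <;> rw [e3, e4] <;> linarith
        refine ⟨by omega, by omega, e5, Or.inl ⟨hd, by omega, e4⟩⟩
      · refine ⟨_, _, by simp only [g2]; rw [if_neg hd], ?_⟩
        generalize e1 : (w + 2 * x) = w'
        generalize e2 : ((w : ℤ) - x).natAbs = x'
        have e3 : w' = w + 2 * x := by omega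
        have e4 : (x' : ℤ) = w - x ∨ (x' : ℤ) = x - w := by omega
        have e5 : w' ^ 2 + 2 * x' ^ 2 = 3 * L := by
          zify at e3 e ⊢
          rcases e4 with e4 | e4 <;> rw [e3, e4] <;> linarith
        refine ⟨by omega, by omega, e5, Or.inr ⟨hd, by omega, e4⟩⟩
    obtain ⟨w', x', hs, hw', hx', e', hc⟩ := key2
    have hw3 : ¬ 3 ∣ w' := by omega
    have hpm2 := pm3 w' x' hw3 (key _ w' x' (by omega) (mem_G.2 ⟨hw', hx', e', hw3⟩))
    rw [hs]
    refine ⟨mem_G.2 ⟨hw', hx', e', hw3⟩, ?_⟩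
    simp only [g1]
    split_ifs <;> ext <;> simp only <;> omega
  exact Finset.card_nbij' g1 g2 (fun a ha => (h1 a ha).1) (fun a ha => (h2 a ha).1)
    (fun a ha => (h1 a ha).2) (fun a ha => (h2 a ha).2)

lemma G_parity (L : ℕ) (hL : L % 2 = 1) :
    ((G (3 * L)).card : ZMod 2) = if IsSquare L ∨ IsSquare (3 * L) then 1 else 0 := by
  induction L using Nat.strong_induction_on with
  | _ L ih =>
    by_cases h3 : 3 ∣ L
    · rw [G_step L hL h3]
      obtain ⟨K, rfl⟩ := h3
      rw [ih K (by omega) (by omega)]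
      have : IsSquare (3 * (3 * K)) ↔ IsSquare K := by
        constructor
        · rintro ⟨r, hr⟩
          have h3r : 3 ∣ r := by
            have : 3 ∣ r * r := ⟨_, hr.symm⟩
            rcases (Nat.prime_three.dvd_mul).1 this with h | h <;> exact h
          obtain ⟨s, rfl⟩ := h3r
          exact ⟨s, by nlinarith⟩
        · rintro ⟨r, rfl⟩
          exact ⟨3 * r, by ring⟩
      simp only [this, or_comm]
    · rw [G_base L hL h3]
      have : ¬ IsSquare (3 * L) := by
        rintro ⟨r, hr⟩
        have h3r : 3 ∣ r := by
          have : 3 ∣ r * r := ⟨_, hr.symm⟩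
          rcases (Nat.prime_three.dvd_mul).1 this with h | h <;> exact h
        obtain ⟨s, rfl⟩ := h3r
        exact h3 ⟨s * s, by nlinarith⟩
      simp [this]

/-- positive odd solutions of `z² + 7 y² = 16 K` with `3 ∤ y` -/
def Z7 (K : ℕ) : Finset (ℕ × ℕ) :=
  ((Finset.range (16 * K + 1)) ×ˢ (Finset.range (16 * K + 1))).filter
    fun a => a.1 % 2 = 1 ∧ a.2 % 2 = 1 ∧ a.1 ^ 2 + 7 * a.2 ^ 2 = 16 * K ∧ ¬ 3 ∣ a.2

lemma mem_Z7 {K z y : ℕ} :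
    (z, y) ∈ Z7 K ↔ z % 2 = 1 ∧ y % 2 = 1 ∧ z ^ 2 + 7 * y ^ 2 = 16 * K ∧ ¬ 3 ∣ y := by
  simp only [Z7, Finset.mem_filter, Finset.mem_product, Finset.mem_range]
  constructor
  · exact fun h => h.2
  · intro h
    have h1 : 0 < z := by omega
    have h2 : 0 < y := by omega
    refine ⟨⟨?_, ?_⟩, h⟩ <;> nlinarith [h.2.2.1]

def s7 (a : ℕ × ℕ) : ℕ × ℕ :=
  if 16 ∣ (a.1 : ℤ) + 3 * a.2 then (((a.1 : ℤ) - 21 * a.2).natAbs / 8, (3 * a.1 + a.2) / 8)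
  else ((a.1 + 21 * a.2) / 8, (3 * (a.1 : ℤ) - a.2).natAbs / 8)

lemma pm16 (K z y : ℕ) (hK : K % 2 = 1) (hz : z % 2 = 1) (hy : y % 2 = 1)
    (e : z ^ 2 + 7 * y ^ 2 = 16 * K) :
    ((16 ∣ (z : ℤ) + 3 * y) ∧ ¬ 4 ∣ (z : ℤ) - 3 * y) ∨
    ((¬ 4 ∣ (z : ℤ) + 3 * y) ∧ 16 ∣ (z : ℤ) - 3 * y) := by
  obtain ⟨a, rfl⟩ : ∃ a, z = 2 * a + 1 := ⟨z / 2, by omega⟩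
  obtain ⟨b, rfl⟩ : ∃ b, y = 2 * b + 1 := ⟨y / 2, by omega⟩
  obtain ⟨k, rfl⟩ : ∃ k, K = 2 * k + 1 := ⟨K / 2, by omega⟩
  have h1 : ((a : ℤ) + 3 * b + 2) * ((a : ℤ) - 3 * b - 1) = 8 * (k - 2 * b * b - 2 * b) := by
    zify at e
    nlinarith
  have h8 : (8 : ℤ) ∣ ((a : ℤ) + 3 * b + 2) * ((a : ℤ) - 3 * b - 1) := ⟨_, h1⟩
  have hc8 : ∀ x : ℤ, x % 2 = 1 → IsCoprime (8 : ℤ) x := by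
    intro x hx
    have : IsCoprime (2 : ℤ) x := by
      rw [Int.isCoprime_iff_gcd_eq_one]
      have := (Int.odd_iff.2 hx)
      exact Int.isCoprime_iff_gcd_eq_one.1 (Int.isCoprime_two_left.2 this)
    exact (IsCoprime.pow_left (m := 3) this)
  rcases Int.emod_two_eq_zero_or_one ((a : ℤ) + 3 * b + 2) with h | h
  · have h2 := (hc8 ((a : ℤ) - 3 * b - 1) (by omega)).dvd_of_dvd_mul_right h8
    left
    push_cast
    constructor <;> omega
  · have h2 := (hc8 _ h).dvd_of_dvd_mul_left h8
    right
    push_cast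
    constructor <;> omega

lemma Z7_parity (K : ℕ) (hK : K % 2 = 1) :
    ((Z7 K).card : ZMod 2) = if IsSquare K ∧ ¬ 3 ∣ K then 1 else 0 := by
  have h1 : ∀ a ∈ Z7 K, s7 a ∈ Z7 K ∧ s7 (s7 a) = a := by
    rintro ⟨z, y⟩ h
    rw [mem_Z7] at h
    obtain ⟨hz, hy, e, h3⟩ := h
    have hpm := pm16 K z y hK hz hy e
    have key2 : ∃ z' y' : ℕ, s7 (z, y) = (z', y') ∧ z' % 2 = 1 ∧ y' % 2 = 1 ∧ ¬ 3 ∣ y' ∧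
        z' ^ 2 + 7 * y' ^ 2 = 16 * K ∧ (((16 ∣ (z : ℤ) + 3 * y) ∧ 8 * y' = 3 * z + y ∧ 
          (8 * (z' : ℤ) = z - 21 * y ∨ 8 * (z' : ℤ) = 21 * y - z)) ∨ 
          ((¬ 16 ∣ (z : ℤ) + 3 * y) ∧ 8 * z' = z + 21 * y ∧ 
          (8 * (y' : ℤ) = 3 * z - y ∨ 8 * (y' : ℤ) = y - 3 * z))) := by
      by_cases hd : 16 ∣ (z : ℤ) + 3 * y
      · refine ⟨_, _, by simp only [s7]; rw [if_pos hd], ?_⟩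
        generalize e1 : ((z : ℤ) - 21 * y).natAbs / 8 = z'
        generalize e2 : (3 * z + y) / 8 = y'
        have e3 : 8 * y' = 3 * z + y := by omega
        have e4 : 8 * (z' : ℤ) = z - 21 * y ∨ 8 * (z' : ℤ) = 21 * y - z := by omega
        have e5 : z' ^ 2 + 7 * y' ^ 2 = 16 * K := by
          zify at e3 e ⊢
          rcases e4 with e4 | e4 <;> nlinarith
        refine ⟨by omega, by omega, by omega, e5, Or.inl ⟨hd, e3, e4⟩⟩
      · refine ⟨_, _, by simp only [s7]; rw [if_neg hd], ?_⟩
        generalize e1 : (z + 21 * y) / 8 = z'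
        generalize e2 : (3 * (z : ℤ) - y).natAbs / 8 = y'
        have e3 : 8 * z' = z + 21 * y := by omega
        have e4 : 8 * (y' : ℤ) = 3 * z - y ∨ 8 * (y' : ℤ) = y - 3 * z := by omega
        have e5 : z' ^ 2 + 7 * y' ^ 2 = 16 * K := by
          zify at e3 e ⊢
          rcases e4 with e4 | e4 <;> nlinarith
        refine ⟨by omega, by omega, by omega, e5, Or.inr ⟨hd, e3, e4⟩⟩
    obtain ⟨z', y', hs, hz', hy', h3', e', hc⟩ := key2
    have hpm2 := pm16 K z' y' hK hz' hy' e'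
    rw [hs]
    refine ⟨mem_Z7.2 ⟨hz', hy', e', h3'⟩, ?_⟩
    simp only [s7]
    split_ifs <;> ext <;> simp only <;> omega
  rw [card_invol _ s7 (fun a ha => (h1 a ha).1) (fun a ha => (h1 a ha).2)]
  have hfix : ∀ z y : ℕ, (z, y) ∈ Z7 K → (s7 (z, y) = (z, y) ↔ z = 3 * y) := by
    intro z y h
    rw [mem_Z7] at h
    obtain ⟨hz, hy, e, h3⟩ := h
    have hpm := pm16 K z y hK hz hy e
    simp only [s7]
    split_ifs <;> simp only [Prod.mk.injEq] <;> omega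
  split_ifs with hsq
  · obtain ⟨⟨r, hr⟩, h3⟩ := hsq
    have hr3 : ¬ 3 ∣ r := fun hd => h3 (hr ▸ Dvd.dvd.mul_left hd r)
    have hr2 : r % 2 = 1 := by
      by_contra hh
      obtain ⟨t, rfl⟩ : ∃ t, r = 2 * t := ⟨r / 2, by omega⟩
      have : 2 * t * (2 * t) = 2 * (2 * t * t) := by ring
      omega
    have : (Z7 K).filter (fun x => s7 x = x) = {(3 * r, r)} := by
      ext ⟨z, y⟩
      rw [Finset.mem_filter, Finset.mem_singleton]
      constructor
      · rintro ⟨h, h'⟩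
        have := (hfix z y h).1 h'
        subst this
        rw [mem_Z7] at h
        have : y = r := by nlinarith [h.2.2.1]
        rw [this]
      · intro hwx
        rw [Prod.mk.injEq] at hwx
        obtain ⟨hw1, rfl⟩ := hwx
        subst hw1
        have hm : (3 * y, y) ∈ Z7 K := 
          mem_Z7.2 ⟨by omega, by omega, by rw [hr]; ring, hr3⟩
        exact ⟨hm, (hfix _ y hm).2 rfl⟩
    rw [this]; simp
  · have : (Z7 K).filter (fun x => s7 x = x) = ∅ := by
      ext ⟨z, y⟩
      rw [Finset.mem_filter]
      simp only [Finset.notMem_empty, iff_false]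
      rintro ⟨h, h'⟩
      have := (hfix z y h).1 h'
      subst this
      rw [mem_Z7] at h
      have hK2 : K = y * y := by nlinarith [h.2.2.1]
      refine hsq ⟨⟨y, hK2⟩, ?_⟩
      rw [hK2, Nat.prime_three.dvd_mul]
      simp [h.2.2.2]
    rw [this]; simp

/-- signed solutions of `3 u² + 2 v² = M`, `v ≡ 1 (mod 3)`, `u ≡ t (mod 3)` -/
noncomputable def S (t M : ℤ) : Finset (ℤ × ℤ) :=
  ((Finset.Icc (-M) M) ×ˢ (Finset.Icc (-M) M)).filter
    fun a => 3 * a.1 ^ 2 + 2 * a.2 ^ 2 = M ∧ 3 ∣ a.2 - 1 ∧ 3 ∣ a.1 - t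

lemma mem_S {t M : ℤ} {a : ℤ × ℤ} :
    a ∈ S t M ↔ 3 * a.1 ^ 2 + 2 * a.2 ^ 2 = M ∧ 3 ∣ a.2 - 1 ∧ 3 ∣ a.1 - t := by
  obtain ⟨u, v⟩ := a
  simp only [S, Finset.mem_filter, Finset.mem_product, Finset.mem_Icc]
  constructor
  · exact fun h => h.2
  · intro h
    have h1 := h.1
    refine ⟨⟨⟨?_, ?_⟩, ?_, ?_⟩, h⟩ <;>
      nlinarith [Int.le_self_sq u, Int.le_self_sq v, Int.le_self_sq (-u), Int.le_self_sq (-v)]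

lemma S_congr (t t' M : ℤ) (h : 3 ∣ t - t') : S t M = S t' M := by
  ext a
  rw [mem_S, mem_S]
  have : 3 ∣ a.1 - t ↔ 3 ∣ a.1 - t' := by omega
  rw [this]

lemma S_neg (t M : ℤ) : (S (-t) M).card = (S t M).card := by
  refine Finset.card_nbij' (fun a => (-a.1, a.2)) (fun a => (-a.1, a.2)) ?_ ?_ ?_ ?_
  · intro a ha
    simp only [Finset.mem_coe, mem_S] at ha ⊢
    refine ⟨by rw [← ha.1]; ring, ha.2.1, by omega⟩
  · intro a ha
    simp only [Finset.mem_coe, mem_S] at ha ⊢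
    refine ⟨by rw [← ha.1]; ring, ha.2.1, by omega⟩
  · intro a _; simp
  · intro a _; simp

lemma S_zero (M : ℤ) (hM : M % 2 = 1) : ((S 0 M).card : ZMod 2) = 0 := by
  rw [card_invol (S 0 M) (fun a => (-a.1, a.2)) ?_ ?_]
  · have : (S 0 M).filter (fun a => ((-a.1, a.2) : ℤ × ℤ) = a) = ∅ := by
      ext ⟨u, v⟩
      rw [Finset.mem_filter, mem_S]
      simp only [Finset.notMem_empty, iff_false, Prod.mk.injEq]
      rintro ⟨⟨h, -⟩, h', -⟩
      have : u = 0 := by omega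
      subst this
      ring_nf at h
      omega
    rw [this]; simp
  · intro a ha
    simp only [mem_S] at ha ⊢
    refine ⟨by rw [← ha.1]; ring, ha.2.1, by omega⟩
  · intro a _; simp

/-- multiplication by `a + b √-6` -/
def mu (a b : ℤ) (x : ℤ × ℤ) : ℤ × ℤ := (x.1 * a - 2 * x.2 * b, x.2 * a + 3 * x.1 * b)

lemma mu_inj (a b : ℤ) (h : a ^ 2 + 6 * b ^ 2 ≠ 0) : Function.Injective (mu a b) := by
  rintro ⟨u, v⟩ ⟨u', v'⟩ he
  simp only [mu, Prod.mk.injEq] at he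
  obtain ⟨h1, h2⟩ := he
  have e1 : (a ^ 2 + 6 * b ^ 2) * (u - u') = 0 := by linear_combination a * h1 + 2 * b * h2
  have e2 : (a ^ 2 + 6 * b ^ 2) * (v - v') = 0 := by linear_combination a * h2 - 3 * b * h1
  have e1 := (mul_eq_zero.1 e1).resolve_left h
  have e2 := (mul_eq_zero.1 e2).resolve_left h
  ext <;> simp only <;> omega

lemma mu_mem (a b t M : ℤ) (ha : 3 ∣ a - 1) (x : ℤ × ℤ) (hx : x ∈ S t M) :
    mu a b x ∈ S (t + b) ((a ^ 2 + 6 * b ^ 2) * M) := by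
  obtain ⟨u, v⟩ := x
  rw [mem_S] at hx ⊢
  simp only [mu] at hx ⊢
  obtain ⟨h1, ⟨v1, h2⟩, ⟨u1, h3⟩⟩ := hx
  obtain ⟨a1, h4⟩ := ha
  refine ⟨by rw [← h1]; ring, ?_, ?_⟩
  · have : a = 3 * a1 + 1 := by omega
    have : v = 3 * v1 + 1 := by omega
    subst a v
    exact ⟨3 * v1 * a1 + v1 + a1 + u * b, by ring⟩
  · have : a = 3 * a1 + 1 := by omega
    have : v = 3 * v1 + 1 := by omega
    have : u = 3 * u1 + t := by omega
    subst a v u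
    exact ⟨3 * u1 * a1 + u1 + t * a1 - 2 * v1 * b - b, by ring⟩

/-- The preimage under `mu a b` given divisibility. -/
lemma mu_surj (a b t M q : ℤ) (hq : q ^ 2 = a ^ 2 + 6 * b ^ 2) (hq0 : q ≠ 0)
    (ha : 3 ∣ a - 1) (x : ℤ × ℤ) (hx : x ∈ S t (q ^ 2 * M))
    (hd : q ^ 2 ∣ x.2 * a - 3 * x.1 * b) (hd2 : q ^ 2 ∣ x.1 * a + 2 * x.2 * b) :
    x ∈ (S (t - b) M).image (mu a b) := by
  obtain ⟨u, v⟩ := x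
  simp only at hd hd2
  obtain ⟨v', hv⟩ := hd
  obtain ⟨u', hu⟩ := hd2
  have hq2 : q ^ 2 ≠ 0 := pow_ne_zero 2 hq0
  rw [mem_S] at hx
  simp only at hx
  obtain ⟨h1, h2, h3⟩ := hx
  rw [Finset.mem_image]
  have eu : u = u' * a - 2 * v' * b := by
    apply mul_left_cancel₀ hq2
    linear_combination a * hu - 2 * b * hv + u * hq
  have ev : v = v' * a + 3 * u' * b := by
    apply mul_left_cancel₀ hq2
    linear_combination a * hv + 3 * b * hu + v * hq
  refine ⟨(u', v'), ?_, ?_⟩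
  · rw [mem_S]
    simp only
    obtain ⟨a1, h4⟩ := ha
    have ha' : a = 3 * a1 + 1 := by omega
    have hv3 : 3 ∣ v' - 1 := by
      have : v' - 1 = (v - 1) - 3 * (a1 * v' + u' * b) := by rw [ev, ha']; ring
      rw [this]
      exact dvd_sub h2 ⟨_, rfl⟩
    obtain ⟨v1, hv1⟩ := hv3
    refine ⟨?_, ⟨v1, hv1⟩, ?_⟩
    · apply mul_left_cancel₀ hq2
      rw [← h1, eu, ev, hq]; ring
    · have : u' - (t - b) = (u - t) + 3 * (b + 2 * v1 * b - u' * a1) := by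
        have : v' = 3 * v1 + 1 := by omega
        rw [eu, ha', this]; ring
      rw [this]
      exact dvd_add h3 ⟨_, rfl⟩
  · simp only [mu]
    rw [← eu, ← ev]


lemma q_coprime (q a : ℤ) (hq : Prime q) (h : ¬ q ∣ a) : IsCoprime (q ^ 2) a :=
  ((hq.coprime_iff_not_dvd).2 h).pow_left

lemma mu_surj' (a b t M q : ℤ) (hq : q ^ 2 = a ^ 2 + 6 * b ^ 2) (hqp : Prime q)
    (hqa : ¬ q ∣ a) (ha : 3 ∣ a - 1) (x : ℤ × ℤ) (hx : x ∈ S t (q ^ 2 * M))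
    (hd : q ^ 2 ∣ x.2 * a - 3 * x.1 * b) :
    x ∈ (S (t - b) M).image (mu a b) := by
  refine mu_surj a b t M q hq hqp.ne_zero ha x hx hd ?_
  refine (q_coprime q a hqp hqa).dvd_of_dvd_mul_left ?_
  have : a * (x.1 * a + 2 * x.2 * b) = q ^ 2 * x.1 + 2 * b * (x.2 * a - 3 * x.1 * b) := by
    rw [hq]; ring
  rw [this]
  exact dvd_add ⟨_, rfl⟩ (Dvd.dvd.mul_left hd _)

lemma mu_back (a b q : ℤ) (s : Finset (ℤ × ℤ)) (hq : q ^ 2 = a ^ 2 + 6 * b ^ 2) (x : ℤ × ℤ)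
    (hx : x ∈ s.image (mu a b)) :
    q ^ 2 ∣ x.2 * a - 3 * x.1 * b ∧ q ^ 2 ∣ x.1 * a + 2 * x.2 * b := by
  rw [Finset.mem_image] at hx
  obtain ⟨⟨u, v⟩, -, rfl⟩ := hx
  simp only [mu]
  rw [hq]
  exact ⟨⟨v, by ring⟩, ⟨u, by ring⟩⟩

lemma tri (a b t M q : ℤ) (hq : q ^ 2 = a ^ 2 + 6 * b ^ 2) (hqp : Prime q)
    (hq2 : ¬ q ∣ 2) (hq3 : ¬ q ∣ 3)
    (hqa : ¬ q ∣ a) (hqb : ¬ q ∣ b) (x : ℤ × ℤ) (hx : x ∈ S t (q ^ 2 * M)) :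
    (q ∣ (x.2 * a - 3 * x.1 * b) * (x.2 * a + 3 * x.1 * b) ∧ 
      q ^ 2 ∣ (x.2 * a - 3 * x.1 * b) * (x.2 * a + 3 * x.1 * b)) ∧
    (q ^ 2 ∣ x.2 * a - 3 * x.1 * b ∨ q ^ 2 ∣ x.2 * a + 3 * x.1 * b ∨ (q ∣ x.1 ∧ q ∣ x.2)) := by
  rw [mem_S] at hx
  obtain ⟨u, v⟩ := x
  obtain ⟨h1, -, -⟩ := hx
  simp only at h1 ⊢
  have hprod : q ^ 2 ∣ (v * a - 3 * u * b) * (v * a + 3 * u * b) := by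
    refine (q_coprime q 2 hqp hq2).dvd_of_dvd_mul_left ?_
    refine ⟨M * a ^ 2 - 3 * u ^ 2, ?_⟩
    linear_combination a ^ 2 * h1 + 3 * u ^ 2 * hq
  refine ⟨⟨dvd_trans ⟨q, by ring⟩ hprod, hprod⟩, ?_⟩
  by_cases hA : q ∣ v * a - 3 * u * b
  · by_cases hB : q ∣ v * a + 3 * u * b
    · right; right
      constructor
      · have : q ∣ 2 * (3 * (b * u)) := by
          have := dvd_sub hB hA
          ring_nf at this ⊢
          exact this
        exact (((hqp.dvd_or_dvd this).resolve_left hq2 |> hqp.dvd_or_dvd).resolve_left hq3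
          |> hqp.dvd_or_dvd).resolve_left hqb
      · have : q ∣ 2 * (a * v) := by
          have := dvd_add hB hA
          ring_nf at this ⊢
          exact this
        exact ((hqp.dvd_or_dvd this).resolve_left hq2 |> hqp.dvd_or_dvd).resolve_left hqa
    · left
      exact (q_coprime q _ hqp hB).dvd_of_dvd_mul_right hprod
  · right; left
    exact (q_coprime q _ hqp hA).dvd_of_dvd_mul_left hprod

lemma both (a b q : ℤ) (hqp : Prime q) (hq2 : ¬ q ∣ 2) (hq3 : ¬ q ∣ 3)
    (hqa : ¬ q ∣ a) (hqb : ¬ q ∣ b) (u v : ℤ) 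
    (hA : q ^ 2 ∣ v * a - 3 * u * b) (hB : q ^ 2 ∣ v * a + 3 * u * b) : q ^ 2 ∣ u ∧ q ^ 2 ∣ v := by
  constructor
  · have : q ^ 2 ∣ 2 * (3 * (b * u)) := by
      have := dvd_sub hB hA
      ring_nf at this ⊢
      exact this
    exact (q_coprime q _ hqp hqb).dvd_of_dvd_mul_left
      ((q_coprime q _ hqp hq3).dvd_of_dvd_mul_left
      ((q_coprime q _ hqp hq2).dvd_of_dvd_mul_left this))
  · have : q ^ 2 ∣ 2 * (a * v) := by
      have := dvd_add hB hA
      ring_nf at this ⊢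
      exact this
    exact (q_coprime q _ hqp hqa).dvd_of_dvd_mul_left
      ((q_coprime q _ hqp hq2).dvd_of_dvd_mul_left this)

lemma scal (t M q : ℤ) (hq0 : q ≠ 0) (hq1 : 3 ∣ q - 1) (x : ℤ × ℤ) (hx : x ∈ S t (q ^ 2 * M))
    (h1 : q ∣ x.1) (h2 : q ∣ x.2) : x ∈ (S t M).image (mu q 0) := by
  obtain ⟨u, v⟩ := x
  obtain ⟨u', rfl⟩ := h1
  obtain ⟨v', h2⟩ := h2
  simp only at h2
  subst h2
  have := mu_surj q 0 t M q (by ring) hq0 hq1 _ hx ⟨v', by simp only; ring⟩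
    ⟨u', by simp only; ring⟩
  simpa using this

lemma H1 (a b t M q : ℤ) (hq : q ^ 2 = a ^ 2 + 6 * b ^ 2) (hqp : Prime q)
    (hq2 : ¬ q ∣ 2) (hq3 : ¬ q ∣ 3) (hqa : ¬ q ∣ a) (hqb : ¬ q ∣ b)
    (ha : 3 ∣ a - 1) (hq1 : 3 ∣ q - 1) (hM : ¬ q ∣ M) :
    (S t (q ^ 2 * M)).card = (S (t - b) M).card + (S (t + b) M).card + (S t M).card := by
  have hq0 : q ^ 2 ≠ 0 := pow_ne_zero 2 hqp.ne_zero
  have hq' : q ^ 2 = a ^ 2 + 6 * (-b) ^ 2 := by rw [hq]; ring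
  have hU : S t (q ^ 2 * M) = ((S (t - b) M).image (mu a b) ∪ (S (t + b) M).image (mu a (-b))) ∪
      (S t M).image (mu q 0) := by
    ext x
    constructor
    · intro hx
      rw [Finset.mem_union, Finset.mem_union]
      rcases (tri a b t M q hq hqp hq2 hq3 hqa hqb x hx).2 with h | h | ⟨h, h'⟩
      · exact Or.inl (Or.inl (mu_surj' a b t M q hq hqp hqa ha x hx h))
      · left; right
        have := mu_surj' a (-b) t M q hq' hqp hqa ha x hx (by convert h using 1; ring)
        rwa [sub_neg_eq_add] at this
      · right
        exact scal t M q hqp.ne_zero hq1 x hx h h'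
    · intro hx
      rw [Finset.mem_union, Finset.mem_union, Finset.mem_image, Finset.mem_image,
        Finset.mem_image] at hx
      rcases hx with (⟨y, hy, rfl⟩ | ⟨y, hy, rfl⟩) | ⟨y, hy, rfl⟩
      · have := mu_mem a b _ M ha y hy
        rwa [sub_add_cancel, ← hq] at this
      · have := mu_mem a (-b) _ M ha y hy
        rwa [add_neg_cancel_right, ← hq'] at this
      · have := mu_mem q 0 _ M hq1 y hy
        simpa using this
  have hnorm : ∀ x ∈ S t (q ^ 2 * M), ¬ (q ^ 2 ∣ x.1 ∧ q ^ 2 ∣ x.2) := by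
    rintro ⟨u, v⟩ hx ⟨⟨u', h1⟩, ⟨v', h2⟩⟩
    rw [mem_S] at hx
    obtain ⟨hx, -⟩ := hx
    simp only at hx h1 h2
    subst u v
    apply hM
    have : q ^ 2 * M = q ^ 2 * (q * (q * (3 * u' ^ 2 + 2 * v' ^ 2))) := by rw [← hx]; ring
    exact ⟨_, mul_left_cancel₀ hq0 this⟩
  have hd0 : ∀ b : ℤ, q ^ 2 = a ^ 2 + 6 * b ^ 2 → ¬ q ∣ b → ∀ s x, x ∈ (s : Finset (ℤ × ℤ)).image (mu a b) → 
      x ∈ (S t M).image (mu q 0) → False := by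
    intro b hq hqb s x hx hx'
    obtain ⟨h1, h2⟩ := mu_back a b q _ hq x hx
    rw [Finset.mem_image] at hx'
    obtain ⟨⟨u, v⟩, hy, rfl⟩ := hx'
    simp only [mu] at h1 h2
    have h1 : q ∣ v * a - 3 * u * b := by
      refine (mul_dvd_mul_iff_left hqp.ne_zero).1 ?_
      have e : q * (v * a - 3 * u * b) = (v * q + 3 * u * 0) * a - 3 * (u * q - 2 * v * 0) * b := by
        ring
      rw [e, ← sq]; exact h1
    have h2 : q ∣ u * a + 2 * v * b := by
      refine (mul_dvd_mul_iff_left hqp.ne_zero).1 ?_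
      have e : q * (u * a + 2 * v * b) = (u * q - 2 * v * 0) * a + 2 * (v * q + 3 * u * 0) * b := by
        ring
      rw [e, ← sq]; exact h2
    rw [mem_S] at hy
    obtain ⟨hy, -⟩ := hy
    simp only at hy
    have : q ∣ 2 * (2 * (3 * (b * (b * M)))) := by
      obtain ⟨r, hr⟩ := h1
      obtain ⟨s, hs⟩ := h2
      have e1 : v * a = q * r + 3 * u * b := by linarith
      have e2 : u * a = q * s - 2 * v * b := by linarith
      have e3 : a ^ 2 * M = 3 * (q * s - 2 * v * b) ^ 2 + 2 * (q * r + 3 * u * b) ^ 2 := by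
        rw [← e1, ← e2, ← hy]; ring
      refine ⟨q * M - 3 * (q * s ^ 2 - 4 * s * v * b) - 2 * (q * r ^ 2 + 6 * r * u * b), ?_⟩
      linear_combination -M * hq - e3 - 6 * b ^ 2 * hy
    rcases hqp.dvd_or_dvd this with h | h
    · exact hq2 h
    rcases hqp.dvd_or_dvd h with h | h
    · exact hq2 h
    rcases hqp.dvd_or_dvd h with h | h
    · exact hq3 h
    rcases hqp.dvd_or_dvd h with h | h
    · exact hqb h
    rcases hqp.dvd_or_dvd h with h | h
    · exact hqb h
    · exact hM h
  have hqb' : ¬ q ∣ -b := by rwa [dvd_neg]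
  have hmem : ∀ x, x ∈ (S (t - b) M).image (mu a b) → x ∈ S t (q ^ 2 * M) := by
    intro x hx; rw [hU]; simp only [Finset.mem_union]; tauto
  have hD1 : Disjoint ((S (t - b) M).image (mu a b)) ((S (t + b) M).image (mu a (-b))) := by
    rw [Finset.disjoint_left]
    intro x hx hx'
    have h1 := (mu_back a b q _ hq x hx).1
    have h2 := (mu_back a (-b) q _ hq' x hx').1
    exact hnorm x (hmem x hx) (both a b q hqp hq2 hq3 hqa hqb x.1 x.2 h1
      (by convert h2 using 1; ring))
  have hD2 : Disjoint ((S (t - b) M).image (mu a b) ∪ (S (t + b) M).image (mu a (-b)))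
      ((S t M).image (mu q 0)) := by
    rw [Finset.disjoint_left]
    intro x hx hx'
    rw [Finset.mem_union] at hx
    rcases hx with hx | hx
    · exact hd0 b hq hqb _ x hx hx'
    · exact hd0 (-b) hq' hqb' _ x hx hx'
  rw [hU, Finset.card_union_of_disjoint hD2, Finset.card_union_of_disjoint hD1,
    Finset.card_image_of_injective _ (mu_inj a b (hq ▸ hq0)),
    Finset.card_image_of_injective _ (mu_inj a (-b) (hq' ▸ hq0)),
    Finset.card_image_of_injective _ (mu_inj q 0 (by simpa using hqp.ne_zero))]

lemma H2 (a b t M q : ℤ) (hq : q ^ 2 = a ^ 2 + 6 * b ^ 2) (hqp : Prime q)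
    (hq2 : ¬ q ∣ 2) (hq3 : ¬ q ∣ 3) (hqa : ¬ q ∣ a) (hqb : ¬ q ∣ b)
    (ha : 3 ∣ a - 1) (hq1 : 3 ∣ q - 1) :
    (S t (q ^ 2 * (q ^ 2 * M))).card + (S t M).card = 
      (S (t - b) (q ^ 2 * M)).card + (S (t + b) (q ^ 2 * M)).card := by
  have hq0 : q ^ 2 ≠ 0 := pow_ne_zero 2 hqp.ne_zero
  have hq' : q ^ 2 = a ^ 2 + 6 * (-b) ^ 2 := by rw [hq]; ring
  have hq21 : 3 ∣ q ^ 2 - 1 := by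
    have : q ^ 2 - 1 = (q - 1) * (q + 1) := by ring
    rw [this]; exact Dvd.dvd.mul_right hq1 _
  have hU : S t (q ^ 2 * (q ^ 2 * M)) = 
      (S (t - b) (q ^ 2 * M)).image (mu a b) ∪ (S (t + b) (q ^ 2 * M)).image (mu a (-b)) := by
    ext x
    constructor
    · intro hx
      rw [Finset.mem_union]
      have h : q ^ 2 ∣ x.2 * a - 3 * x.1 * b ∨ q ^ 2 ∣ x.2 * a + 3 * x.1 * b := by
        rcases (tri a b t _ q hq hqp hq2 hq3 hqa hqb x hx).2 with h | h | ⟨h, h'⟩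
        · exact Or.inl h
        · exact Or.inr h
        · have := scal t _ q hqp.ne_zero hq1 x hx h h'
          rw [Finset.mem_image] at this
          obtain ⟨⟨u, v⟩, hy, rfl⟩ := this
          have h1 := (tri a b t _ q hq hqp hq2 hq3 hqa hqb _ hy).1.1
          simp only [mu] at h1 ⊢
          rcases hqp.dvd_or_dvd h1 with ⟨c, h1⟩ | ⟨c, h1⟩
          · left; exact ⟨c, by linear_combination q * h1⟩
          · right; exact ⟨c, by linear_combination q * h1⟩
      rcases h with h | h
      · exact (Or.inl (mu_surj' a b t _ q hq hqp hqa ha x hx h))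
      · right
        have := mu_surj' a (-b) t _ q hq' hqp hqa ha x hx (by convert h using 1; ring)
        rwa [sub_neg_eq_add] at this
    · intro hx
      rw [Finset.mem_union, Finset.mem_image, Finset.mem_image] at hx
      rcases hx with (⟨y, hy, rfl⟩ | ⟨y, hy, rfl⟩)
      · have := mu_mem a b _ _ ha y hy
        rwa [sub_add_cancel, ← hq] at this
      · have := mu_mem a (-b) _ _ ha y hy
        rwa [add_neg_cancel_right, ← hq'] at this
  have hI : (S (t - b) (q ^ 2 * M)).image (mu a b) ∩ (S (t + b) (q ^ 2 * M)).image (mu a (-b)) = 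
      (S t M).image (mu (q ^ 2) 0) := by
    ext x
    constructor
    · intro hx
      have hm : x ∈ S t (q ^ 2 * (q ^ 2 * M)) := by
        rw [hU]; rw [Finset.mem_inter] at hx; rw [Finset.mem_union]; exact Or.inl hx.1
      rw [Finset.mem_inter] at hx
      obtain ⟨hx, hx'⟩ := hx
      have h1 := (mu_back a b q _ hq x hx).1
      have h2 := (mu_back a (-b) q _ hq' x hx').1
      obtain ⟨h3, h4⟩ := both a b q hqp hq2 hq3 hqa hqb x.1 x.2 h1 (by convert h2 using 1; ring)
      refine scal t M (q ^ 2) hq0 hq21 x ?_ h3 h4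
      convert hm using 2; ring
    · intro hx
      rw [Finset.mem_image] at hx
      obtain ⟨y, hy, rfl⟩ := hx
      have hm : mu (q ^ 2) 0 y ∈ S t (q ^ 2 * (q ^ 2 * M)) := by
        have := mu_mem (q ^ 2) 0 t M hq21 y hy
        convert this using 2 <;> ring
      rw [Finset.mem_inter]
      constructor
      · refine mu_surj' a b t _ q hq hqp hqa ha _ hm ⟨y.2 * a - 3 * y.1 * b, ?_⟩
        simp only [mu]; ring
      · have := mu_surj' a (-b) t _ q hq' hqp hqa ha _ hm ⟨y.2 * a + 3 * y.1 * b, 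
          by simp only [mu]; ring⟩
        rwa [sub_neg_eq_add] at this
  have := Finset.card_union_add_card_inter ((S (t - b) (q ^ 2 * M)).image (mu a b))
    ((S (t + b) (q ^ 2 * M)).image (mu a (-b)))
  rw [← hU, hI, Finset.card_image_of_injective _ (mu_inj a b (hq ▸ hq0)),
    Finset.card_image_of_injective _ (mu_inj a (-b) (hq' ▸ hq0)),
    Finset.card_image_of_injective _ (mu_inj (q ^ 2) 0 (by simpa using hqp.ne_zero))] at this
  exact this


lemma S_eleven : S 1 11 = {(1, -2)} := by
  ext ⟨u, v⟩
  rw [mem_S, Finset.mem_singleton, Prod.mk.injEq]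
  simp only
  constructor
  · rintro ⟨h1, h2, h3⟩
    have hu : u ≤ 1 := by nlinarith
    have hu' : -1 ≤ u := by nlinarith
    have hv : v ≤ 2 := by nlinarith
    have hv' : -2 ≤ v := by nlinarith
    interval_cases u <;> interval_cases v <;> simp_all
  · rintro ⟨rfl, rfl⟩
    norm_num

lemma exists_ab (q : ℤ) (hqp : Prime q) (hq1 : 3 ∣ q - 1)
    (he : ((S 1 (q ^ 2 * 11)).card : ZMod 2) = 0) :
    ∃ a b : ℤ, q ^ 2 = a ^ 2 + 6 * b ^ 2 ∧ 3 ∣ a - 1 ∧ b ≠ 0 := by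
  have hm : (q, -2 * q) ∈ S 1 (q ^ 2 * 11) := by
    rw [mem_S]
    simp only
    exact ⟨by ring, by omega, hq1⟩
  have he' : Even (S 1 (q ^ 2 * 11)).card := (ZMod.natCast_eq_zero_iff_even).1 he
  have hc : 1 < (S 1 (q ^ 2 * 11)).card := by
    have : 0 < (S 1 (q ^ 2 * 11)).card := Finset.card_pos.2 ⟨_, hm⟩
    rcases he' with ⟨r, hr⟩
    omega
  obtain ⟨⟨u, v⟩, hx, hne⟩ := Finset.exists_mem_ne hc (q, -2 * q)
  rw [mem_S] at hx
  simp only at hx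
  obtain ⟨h1, h2, h3⟩ := hx
  have hpr : (11 : ℤ) ∣ (3 * u + 4 * v) * (3 * u - 4 * v) :=
    ⟨3 * q ^ 2 - 2 * v ^ 2, by linear_combination 3 * h1⟩
  have h11 : Prime (11 : ℤ) := by norm_num
  have hsq : ∀ u : ℤ, 11 * u ^ 2 = q ^ 2 * 11 → u = q ∨ u = -q := by
    intro u hu
    apply sq_eq_sq_iff_eq_or_eq_neg.1
    linarith
  rcases h11.dvd_or_dvd hpr with ⟨a, ha⟩ | ⟨a, ha⟩
  · obtain ⟨b, hb⟩ : (11 : ℤ) ∣ v - 2 * u := by omega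
    refine ⟨-a, b, ?_, by omega, ?_⟩
    · have : 121 * q ^ 2 = 121 * ((-a) ^ 2 + 6 * b ^ 2) := by
        have e1 : (3 * u + 4 * v) ^ 2 = (11 * a) ^ 2 := by rw [ha]
        have e2 : (v - 2 * u) ^ 2 = (11 * b) ^ 2 := by rw [hb]
        linear_combination -11 * h1 + e1 + 6 * e2
      linarith
    · rintro rfl
      have hv : v = 2 * u := by omega
      omega
  · obtain ⟨b, hb⟩ : (11 : ℤ) ∣ v + 2 * u := by omega
    refine ⟨a, b, ?_, by omega, ?_⟩
    · have : 121 * q ^ 2 = 121 * (a ^ 2 + 6 * b ^ 2) := by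
        have e1 : (3 * u - 4 * v) ^ 2 = (11 * a) ^ 2 := by rw [ha]
        have e2 : (v + 2 * u) ^ 2 = (11 * b) ^ 2 := by rw [hb]
        linear_combination -11 * h1 + e1 + 6 * e2
      linarith
    · rintro rfl
      have hv : v = -2 * u := by omega
      subst hv
      rcases hsq u (by linarith) with h | h
      · subst h; exact hne rfl
      · omega

lemma hecke_main (q : ℤ) (hqp : Prime q) (hq1 : 3 ∣ q - 1) (hq2 : ¬ q ∣ 2) (hq3 : ¬ q ∣ 3)
    (hq11 : ¬ q ∣ 11) (he : ((S 1 (q ^ 2 * 11)).card : ZMod 2) = 0)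
    (N : ℤ) (hN : ¬ q ∣ N) (hNo : N % 2 = 1) (hqo : q % 2 = 1) (k : ℕ) :
    ((S 1 (q ^ (6 * k + 2) * N)).card : ZMod 2) = 0 := by
  obtain ⟨a, b, hab, ha, hb⟩ := exists_ab q hqp hq1 he
  have hqb : ¬ q ∣ b := by
    rintro ⟨c, rfl⟩
    have hc : c ≠ 0 := by rintro rfl; simp at hb
    have hq0 : 0 < q ^ 2 := by have := hqp.ne_zero; positivity
    have hc2 : 0 < c ^ 2 := by positivity
    nlinarith [mul_pos hq0 hc2, sq_nonneg a]
  have h6 : ¬ q ∣ 6 := by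
    intro h
    have : (6 : ℤ) = 2 * 3 := by norm_num
    rw [this] at h
    exact (hqp.dvd_or_dvd h).elim hq2 hq3
  have hqa : ¬ q ∣ a := by
    rintro ⟨c, rfl⟩
    have : q ∣ 6 * (b * b) := ⟨q - q * c ^ 2, by linear_combination -hab⟩
    rcases hqp.dvd_or_dvd this with h | h
    · exact h6 h
    · exact (hqp.dvd_or_dvd h).elim hqb hqb
  have two : ∀ x : ZMod 2, x + x = 0 := by decide
  have hb3 : ¬ 3 ∣ b := by
    intro h3
    have h := H1 a b 1 11 q hab hqp hq2 hq3 hqa hqb ha hq1 hq11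
    rw [S_congr (1 - b) 1 11 (by omega), S_congr (1 + b) 1 11 (by omega), S_eleven] at h
    rw [h] at he
    revert he
    decide
  have hsum : ∀ M : ℤ, M % 2 = 1 →
      ((S (1 - b) M).card : ZMod 2) + ((S (1 + b) M).card : ZMod 2) = ((S 1 M).card : ZMod 2) := by
    intro M hM
    rcases (show 3 ∣ b - 1 ∨ 3 ∣ b + 1 by omega) with h | h
    · rw [S_congr (1 - b) 0 M (by omega), S_congr (1 + b) (-1) M (by omega), S_neg, S_zero M hM,
        zero_add]
    · rw [S_congr (1 - b) (-1) M (by omega), S_congr (1 + b) 0 M (by omega), S_neg, S_zero M hM,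
        add_zero]
  have hodd : ∀ m : ℕ, (q ^ m * N) % 2 = 1 := by
    intro m
    rw [← Int.odd_iff] at hNo hqo ⊢
    exact (hqo.pow).mul hNo
  have x1 : ((S 1 (q ^ 2 * N)).card : ZMod 2) = 0 := by
    rw [H1 a b 1 N q hab hqp hq2 hq3 hqa hqb ha hq1 hN]
    push_cast
    rw [hsum N hNo, two]
  have hrec : ∀ m : ℕ, ((S 1 (q ^ (m + 4) * N)).card : ZMod 2) =
      ((S 1 (q ^ (m + 2) * N)).card : ZMod 2) + ((S 1 (q ^ m * N)).card : ZMod 2) := by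
    intro m
    have h := H2 a b 1 (q ^ m * N) q hab hqp hq2 hq3 hqa hqb ha hq1
    have e1 : q ^ 2 * (q ^ 2 * (q ^ m * N)) = q ^ (m + 4) * N := by ring
    have e2 : q ^ 2 * (q ^ m * N) = q ^ (m + 2) * N := by ring
    rw [e1, e2] at h
    have h' := congrArg (Nat.cast : ℕ → ZMod 2) h
    push_cast at h'
    rw [hsum _ (hodd _)] at h'
    rw [← h', add_assoc, two, add_zero]
  induction k with
  | zero => exact x1
  | succ k ih =>
    have r1 := hrec (6 * k + 2)
    have r2 := hrec (6 * k + 4)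
    have e : 6 * (k + 1) + 2 = 6 * k + 4 + 4 := by ring
    rw [e, r2]
    have e1 : 6 * k + 4 + 2 = 6 * k + 2 + 4 := by ring
    have e2 : 6 * k + 4 = 6 * k + 2 + 2 := by ring
    rw [e1, r1, ih, add_zero, e2, two]

open PowerSeries in
noncomputable def ff : (ZMod 2)⟦X⟧ := pentagonalSeries (ZMod 2)

lemma range_pentagonal (n : ℕ) : n ∈ Set.range pentagonal ↔ IsSquare (24 * n + 1) := by
  constructor
  · rintro ⟨k, rfl⟩
    have h := two_mul_natCast_pentagonal k
    refine ⟨(6 * k - 1).natAbs, ?_⟩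
    zify
    rw [← sq, sq_abs]
    linear_combination 12 * h
  · rintro ⟨w, hw⟩
    have h2 : w % 2 = 1 := by
      rcases Nat.even_or_odd' w with ⟨c, rfl | rfl⟩
      · exfalso
        have : 2 * c * (2 * c) = 2 * (2 * c * c) := by ring
        omega
      · omega
    have h3 : w % 3 = 1 ∨ w % 3 = 2 := by
      by_contra hc
      have : w % 3 = 0 := by omega
      obtain ⟨c, rfl⟩ := Nat.dvd_of_mod_eq_zero this
      have : 3 * c * (3 * c) = 3 * (3 * c * c) := by ring
      omega
    zify at hw
    obtain ⟨k, hk⟩ : ∃ k : ℤ, (6 * k - 1) ^ 2 = (w : ℤ) ^ 2 := by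
      rcases h3 with h3 | h3
      · refine ⟨-((w : ℤ) / 6), ?_⟩
        have : 6 * (-((w : ℤ) / 6)) - 1 = - w := by omega
        rw [this]; ring
      · refine ⟨((w : ℤ) + 1) / 6, ?_⟩
        have : 6 * (((w : ℤ) + 1) / 6) - 1 = w := by omega
        rw [this]
    refine ⟨k, ?_⟩
    have h := two_mul_natCast_pentagonal k
    have : (pentagonal k : ℤ) = n := by nlinarith
    exact_mod_cast this

open PowerSeries in
lemma coeff_ff (n : ℕ) : coeff n ff = if IsSquare (24 * n + 1) then 1 else 0 := by
  split_ifs with h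
  · rw [← range_pentagonal] at h
    have h1 : coeff n ff ≠ 0 := by
      rw [ff, Ne, coeff_pentagonalSeries_eq_zero_iff, not_not]
      exact h
    generalize coeff n ff = y at *
    revert h1; revert y; decide
  · rw [← range_pentagonal] at h
    exact coeff_pentagonalSeries_eq_zero _ h

open PowerSeries in
lemma sq_expand (φ : (ZMod 2)⟦X⟧) : φ ^ 2 = expand 2 two_ne_zero φ := by
  have := MvPowerSeries.map_frobenius_expand (R := ZMod 2) (σ := Unit) 2 two_ne_zero (f := φ)
  rw [ZMod.frobenius_zmod] at this
  rw [← this]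
  simp only [MvPowerSeries.map_id]
  rfl

open PowerSeries in
noncomputable def BB : (ZMod 2)⟦X⟧ := PowerSeries.mk fun n => (b21 n : ZMod 2)

open PowerSeries PowerSeries.WithPiTopology in
lemma BB_mul : BB * ff = expand 21 (by norm_num) ff := by
  let _ : TopologicalSpace (ZMod 2) := ⊥
  have _ : DiscreteTopology (ZMod 2) := ⟨rfl⟩
  have hB : BB = PowerSeries.mk fun n ↦ ((Nat.Partition.countRestricted n 21).card : ZMod 2) := by
    rw [← Nat.Partition.powerSeriesMk_card_restricted_eq_powerSeriesMk_card_countRestricted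
      (ZMod 2) (by norm_num : 0 < 21)]
    rfl
  have h21 : HasProd (fun i : ℕ => (1 - X ^ (21 * (i + 1)) : (ZMod 2)⟦X⟧))
      (expand 21 (by norm_num) ff) := by
    rw [HasProd, tendsto_iff_coeff_tendsto]
    intro n
    apply tendsto_nhds_of_eventually_eq
    simp only [SummationFilter.unconditional_filter]
    have := coeff_prod_one_sub_X_pow_eventually_eq (ZMod 2) (n / 21)
    filter_upwards [this] with s hs
    have e : ∏ b ∈ s, (1 - X ^ (21 * (b + 1)) : (ZMod 2)⟦X⟧) =
        expand 21 (by norm_num) (∏ b ∈ s, (1 - X ^ (b + 1))) := by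
      rw [map_prod]
      refine Finset.prod_congr rfl fun b _ => ?_
      rw [map_sub, map_one, map_pow, expand_X, ← pow_mul]
    rw [e, coeff_expand, coeff_expand]
    split_ifs
    · exact hs
    · rfl
  rw [hB, Nat.Partition.powerSeriesMk_card_countRestricted_eq_tprod (ZMod 2) (by norm_num : 0 < 21),
    ff, ← tprod_one_sub_X_pow, ← (Nat.Partition.multipliable_powerSeriesMk_card_countRestricted
      (ZMod 2) 21).tprod_mul (PowerSeries.WithPiTopology.multipliable_one_sub_X_pow _),
    tprod_one_sub_X_pow, ← ff, ← h21.tprod_eq]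
  refine tprod_congr fun i => ?_
  simp_rw [pow_mul, geom_sum_mul_neg]
  rw [← pow_mul, ← pow_mul, mul_comm]


open PowerSeries in
lemma coeff_count {α : Type*} [DecidableEq α] (φ ψ : (ZMod 2)⟦X⟧) (P Q : ℕ → Prop)
    [DecidablePred P] [DecidablePred Q]
    (hφ : ∀ n, coeff n φ = if P n then 1 else 0) (hψ : ∀ n, coeff n ψ = if Q n then 1 else 0)
    (n : ℕ) (s : Finset α) (g : α → ℕ × ℕ)
    (hmem : ∀ a ∈ s, (g a).1 + (g a).2 = n ∧ P (g a).1 ∧ Q (g a).2)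
    (hinj : ∀ a ∈ s, ∀ b ∈ s, g a = g b → a = b)
    (hsurj : ∀ i j, i + j = n → P i → Q j → ∃ a ∈ s, g a = (i, j)) :
    coeff n (φ * ψ) = (s.card : ZMod 2) := by
  rw [coeff_mul]
  have : s.card = ((Finset.HasAntidiagonal.antidiagonal n).filter fun a => P a.1 ∧ Q a.2).card := by
    refine Finset.card_bij (fun a _ => g a) ?_ ?_ ?_
    · intro a ha
      rw [Finset.mem_filter, Finset.HasAntidiagonal.mem_antidiagonal]
      exact hmem a ha
    · intro a ha b hb h
      exact hinj a ha b hb h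
    · rintro ⟨i, j⟩ h
      rw [Finset.mem_filter, Finset.HasAntidiagonal.mem_antidiagonal] at h
      obtain ⟨a, ha, h'⟩ := hsurj i j h.1 h.2.1 h.2.2
      exact ⟨a, ha, h'⟩
  rw [this, Finset.card_filter]
  push_cast
  refine Finset.sum_congr rfl fun a _ => ?_
  rw [hφ, hψ]
  by_cases h1 : P a.1 <;> by_cases h2 : Q a.2 <;> simp [h1, h2]

open PowerSeries in
lemma coeff_expand_ff (k : ℕ) (hk : k ≠ 0) (n : ℕ) :
    coeff n (expand k hk ff) = if k ∣ n ∧ IsSquare (24 * (n / k) + 1) then 1 else 0 := by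
  rw [coeff_expand, coeff_ff]
  by_cases h1 : k ∣ n <;> simp [h1]

open PowerSeries in
noncomputable def Psi : (ZMod 2)⟦X⟧ := PowerSeries.mk fun n => if IsSquare (8 * n + 1) then 1 else 0

open PowerSeries in
noncomputable def Theta : (ZMod 2)⟦X⟧ :=
  PowerSeries.mk fun n => if IsSquare (3 * n + 1) then 1 else 0

open PowerSeries in
lemma coeff_Psi (n : ℕ) : coeff n Psi = if IsSquare (8 * n + 1) then 1 else 0 := by
  rw [Psi, coeff_mk]

open PowerSeries in
lemma coeff_Theta (n : ℕ) : coeff n Theta = if IsSquare (3 * n + 1) then 1 else 0 := by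
  rw [Theta, coeff_mk]

lemma sq8 (w : ℕ) : (w % 2 = 1 ∧ w ^ 2 % 8 = 1) ∨ (w % 2 = 0 ∧ (w ^ 2 % 8 = 0 ∨ w ^ 2 % 8 = 4)) := by
  have : w % 8 < 8 := Nat.mod_lt _ (by norm_num)
  rw [Nat.pow_mod]
  have h2 : w % 2 = (w % 8) % 2 := by omega
  rw [h2]
  interval_cases w % 8 <;> simp

lemma sq3 (w : ℕ) : (w % 3 = 0 ∧ w ^ 2 % 3 = 0) ∨ (w % 3 ≠ 0 ∧ w ^ 2 % 3 = 1) := by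
  have : w % 3 < 3 := Nat.mod_lt _ (by norm_num)
  rw [Nat.pow_mod]
  interval_cases w % 3 <;> simp

lemma nat_sq_inj (w x : ℕ) (h : w ^ 2 = x ^ 2) : w = x := Nat.pow_left_injective two_ne_zero h

open PowerSeries in
lemma id_one : ff * expand 2 two_ne_zero ff = Psi := by
  ext m
  have key : coeff m (ff * expand 2 two_ne_zero ff) = ((G (3 * (8 * m + 1))).card : ZMod 2) := by
    refine coeff_count ff _ _ _ coeff_ff (coeff_expand_ff 2 two_ne_zero) m _
      (fun a => ((a.1 ^ 2 - 1) / 24, 2 * ((a.2 ^ 2 - 1) / 24))) ?_ ?_ ?_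
    · rintro ⟨w, x⟩ h
      rw [mem_G] at h
      obtain ⟨h1, h2, h3, h4⟩ := h
      have a1 := sq8 w
      have a2 := sq8 x
      have a3 := sq3 w
      have a4 := sq3 x
      simp only
      refine ⟨by omega, ⟨w, ?_⟩, by omega, ⟨x, ?_⟩⟩
      · rw [← sq]; omega
      · rw [← sq]; omega
    · rintro ⟨w, x⟩ h ⟨w', x'⟩ h' he
      rw [mem_G] at h h'
      obtain ⟨h1, h2, h3, h4⟩ := h
      obtain ⟨h1', h2', h3', h4'⟩ := h'
      have a1 := sq8 w
      have a2 := sq8 x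
      have a3 := sq3 w
      have a4 := sq3 x
      have b1 := sq8 w'
      have b2 := sq8 x'
      have b3 := sq3 w'
      have b4 := sq3 x'
      simp only [Prod.mk.injEq] at he
      rw [nat_sq_inj w w' (by omega), nat_sq_inj x x' (by omega)]
    · rintro i j hij ⟨w, hw⟩ ⟨h2, x, hx⟩
      rw [← sq] at hw hx
      refine ⟨(w, x), ?_, ?_⟩
      · rw [mem_G]
        have a3 := sq3 w
        refine ⟨?_, ?_, by omega, by omega⟩
        · rcases Nat.eq_zero_or_pos w with rfl | h
          · omega
          · exact h
        · rcases Nat.eq_zero_or_pos x with rfl | h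
          · omega
          · exact h
      · simp only [Prod.mk.injEq]
        omega
  rw [key, G_parity _ (by omega), coeff_Psi]
  congr 1
  apply propext
  constructor
  · rintro (h | ⟨r, h⟩)
    · exact h
    · exfalso
      have := sq8 r
      rw [← sq] at h
      omega
  · exact Or.inl

open PowerSeries in
lemma id_two : ff * Theta = expand 3 three_ne_zero Psi := by
  ext m
  have key : coeff m (ff * Theta) = ((G (3 * (8 * m + 3))).card : ZMod 2) := by
    refine coeff_count ff _ _ _ coeff_ff coeff_Theta m _
      (fun a => ((a.1 ^ 2 - 1) / 24, ((a.2 / 2) ^ 2 - 1) / 3)) ?_ ?_ ?_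
    · rintro ⟨w, y⟩ h
      rw [mem_G] at h
      obtain ⟨h1, h2, h3, h4⟩ := h
      have a1 := sq8 w
      have a2 := sq8 y
      have a3 := sq3 w
      have hy : y % 2 = 0 := by omega
      obtain ⟨x, rfl⟩ := Nat.dvd_of_mod_eq_zero hy
      have a4 := sq3 x
      rw [mul_pow] at h3
      simp only [Nat.mul_div_cancel_left x two_pos]
      refine ⟨by omega, ⟨w, ?_⟩, ⟨x, ?_⟩⟩
      · rw [← sq]; omega
      · rw [← sq]; omega
    · rintro ⟨w, y⟩ h ⟨w', y'⟩ h' he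
      rw [mem_G] at h h'
      obtain ⟨h1, h2, h3, h4⟩ := h
      obtain ⟨h1', h2', h3', h4'⟩ := h'
      have a1 := sq8 w
      have a3 := sq3 w
      have b1 := sq8 w'
      have b3 := sq3 w'
      simp only [Prod.mk.injEq] at he
      have := nat_sq_inj w w' (by omega)
      subst this
      rw [nat_sq_inj y y' (by omega)]
    · rintro i j hij ⟨w, hw⟩ ⟨x, hx⟩
      rw [← sq] at hw hx
      refine ⟨(w, 2 * x), ?_, ?_⟩
      · rw [mem_G]
        have a3 := sq3 w
        refine ⟨?_, ?_, by rw [mul_pow]; omega, by omega⟩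
        · rcases Nat.eq_zero_or_pos w with rfl | h
          · omega
          · exact h
        · rcases Nat.eq_zero_or_pos x with rfl | h
          · omega
          · omega
      · simp only [Prod.mk.injEq, Nat.mul_div_cancel_left x two_pos]
        omega
  rw [key, G_parity _ (by omega), coeff_expand, coeff_Psi]
  have : (IsSquare (8 * m + 3) ∨ IsSquare (3 * (8 * m + 3))) ↔
      (3 ∣ m ∧ IsSquare (8 * (m / 3) + 1)) := by
    constructor
    · rintro (⟨r, h⟩ | ⟨r, h⟩)
      · exfalso
        have := sq8 r
        rw [← sq] at h
        omega
      · have a := sq3 r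
        rw [← sq] at h
        have hr : r % 3 = 0 := by omega
        obtain ⟨z, rfl⟩ := Nat.dvd_of_mod_eq_zero hr
        rw [mul_pow] at h
        refine ⟨by omega, z, ?_⟩
        rw [← sq]; omega
    · rintro ⟨⟨c, rfl⟩, z, hz⟩
      right
      rw [Nat.mul_div_cancel_left c (by norm_num)] at hz
      refine ⟨3 * z, ?_⟩
      linear_combination 9 * hz
  by_cases h1 : 3 ∣ m <;> by_cases h2 : IsSquare (8 * (m / 3) + 1) <;> simp [this, h1, h2]

open PowerSeries in
noncomputable def sec (φ : (ZMod 2)⟦X⟧) : (ZMod 2)⟦X⟧ :=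
  PowerSeries.mk fun n => coeff (4 * n + 1) φ

open PowerSeries in
lemma id_three : sec (expand 21 (by norm_num) ff * Psi) = expand 12 (by norm_num) ff := by
  ext n
  rw [sec, coeff_mk]
  have key : coeff (4 * n + 1) (expand 21 (by norm_num) ff * Psi) =
      ((Z7 (2 * n + 1)).card : ZMod 2) := by
    refine coeff_count _ _ _ _ (coeff_expand_ff 21 (by norm_num)) coeff_Psi _ _
      (fun a => (21 * ((a.2 ^ 2 - 1) / 24), (a.1 ^ 2 - 1) / 8)) ?_ ?_ ?_
    · rintro ⟨z, y⟩ h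
      rw [mem_Z7] at h
      obtain ⟨h1, h2, h3, h4⟩ := h
      have a1 := sq8 z
      have a2 := sq8 y
      have a4 := sq3 y
      simp only
      refine ⟨by omega, ⟨by omega, ⟨y, ?_⟩⟩, ⟨z, ?_⟩⟩
      · rw [← sq]; omega
      · rw [← sq]; omega
    · rintro ⟨z, y⟩ h ⟨z', y'⟩ h' he
      rw [mem_Z7] at h h'
      obtain ⟨h1, h2, h3, h4⟩ := h
      obtain ⟨h1', h2', h3', h4'⟩ := h'
      have a1 := sq8 z
      have a2 := sq8 y
      have a4 := sq3 y
      have b1 := sq8 z'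
      have b2 := sq8 y'
      have b4 := sq3 y'
      simp only [Prod.mk.injEq] at he
      rw [nat_sq_inj z z' (by omega), nat_sq_inj y y' (by omega)]
    · rintro i j hij ⟨h2, y, hy⟩ ⟨z, hz⟩
      rw [← sq] at hy hz
      have a1 := sq8 z
      have a2 := sq8 y
      have a4 := sq3 y
      refine ⟨(z, y), ?_, ?_⟩
      · rw [mem_Z7]
        refine ⟨by omega, by omega, by omega, by omega⟩
      · simp only [Prod.mk.injEq]
        omega
  rw [key, Z7_parity _ (by omega), coeff_expand_ff]
  congr 1
  apply propext
  constructor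
  · rintro ⟨⟨r, h⟩, h3⟩
    rw [← sq] at h
    have a1 := sq8 r
    have a2 := sq3 r
    refine ⟨by omega, r, ?_⟩
    rw [← sq]; omega
  · rintro ⟨⟨c, rfl⟩, r, h⟩
    rw [Nat.mul_div_cancel_left c (by norm_num)] at h
    refine ⟨⟨r, ?_⟩, by omega⟩
    omega

open PowerSeries in
lemma sec_mul (φ ψ : (ZMod 2)⟦X⟧) : sec (φ * expand 4 four_ne_zero ψ) = sec φ * ψ := by
  ext n
  rw [sec, coeff_mk, coeff_mul, coeff_mul]
  symm
  refine Finset.sum_of_injOn (fun a => (4 * a.1 + 1, 4 * a.2)) ?_ ?_ ?_ ?_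
  · rintro ⟨i, j⟩ _ ⟨i', j'⟩ _ h
    simp only [Prod.mk.injEq] at h ⊢
    omega
  · rintro ⟨i, j⟩ h
    simp only [Finset.mem_coe, Finset.HasAntidiagonal.mem_antidiagonal] at h ⊢
    omega
  · rintro ⟨i, j⟩ h h'
    rw [Finset.HasAntidiagonal.mem_antidiagonal] at h
    simp only at h ⊢
    rw [coeff_expand_of_not_dvd, mul_zero]
    rintro ⟨c, rfl⟩
    apply h'
    refine ⟨(i / 4, c), ?_, ?_⟩
    · simp only [Finset.mem_coe, Finset.HasAntidiagonal.mem_antidiagonal]; omega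
    · simp only [Prod.mk.injEq, and_true]; omega
  · rintro ⟨i, j⟩ _
    simp only
    rw [coeff_expand_mul, sec, coeff_mk]

lemma ff_ne : ff ≠ 0 := by
  intro h
  have := coeff_ff 0
  rw [h] at this
  simp at this

open PowerSeries in
lemma sec_BB : sec BB = expand 3 three_ne_zero ff * Theta := by
  have h4 : expand 4 four_ne_zero ff = ff ^ 4 := by
    have : ff ^ 4 = (ff ^ 2) ^ 2 := by ring
    rw [this, sq_expand, sq_expand, ← expand_mul]
  have h3 : ff ^ 3 = Psi := by
    rw [← id_one, ← sq_expand]; ring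
  apply mul_right_cancel₀ ff_ne
  rw [← sec_mul, h4]
  have e1 : BB * ff ^ 4 = (BB * ff) * ff ^ 3 := by ring
  rw [e1, BB_mul, h3, id_three]
  have e2 : expand 12 (by norm_num) ff = expand 3 three_ne_zero (expand 4 four_ne_zero ff) := by
    rw [← expand_mul]
  rw [e2, h4]
  have e3 : ff ^ 4 = ff * ff ^ 3 := by ring
  rw [e3, map_mul, h3, ← id_two]
  ring

open PowerSeries in
lemma b21_S (n : ℕ) : (b21 (4 * n + 1) : ZMod 2) = ((S 1 (24 * n + 11)).card : ZMod 2) := by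
  have h0 : (b21 (4 * n + 1) : ZMod 2) = coeff n (sec BB) := by
    rw [sec, coeff_mk, BB, coeff_mk]
  rw [h0, sec_BB]
  refine coeff_count _ _ _ _ (coeff_expand_ff 3 three_ne_zero) coeff_Theta _ _
    (fun a => (3 * ((a.1.natAbs ^ 2 - 1) / 24), ((a.2.natAbs / 2) ^ 2 - 1) / 3)) ?_ ?_ ?_
  · rintro ⟨u, v⟩ h
    rw [mem_S] at h
    obtain ⟨h1, h2, h3⟩ := h
    simp only at h1 h2 h3 ⊢
    have h4 : 3 * u.natAbs ^ 2 + 2 * v.natAbs ^ 2 = 24 * n + 11 := by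
      zify; rw [sq_abs, sq_abs]; exact h1
    have hu : u.natAbs % 3 ≠ 0 := by omega
    have hv : v.natAbs % 3 ≠ 0 := by omega
    generalize u.natAbs = w at *
    generalize v.natAbs = y at *
    have a1 := sq8 w
    have a2 := sq8 y
    have a3 := sq3 w
    have hy : y % 2 = 0 := by omega
    obtain ⟨x, rfl⟩ := Nat.dvd_of_mod_eq_zero hy
    have a4 := sq3 x
    rw [mul_pow] at h4
    simp only [Nat.mul_div_cancel_left x two_pos]
    refine ⟨by omega, ⟨by omega, ⟨w, ?_⟩⟩, ⟨x, ?_⟩⟩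
    · rw [← sq]; omega
    · rw [← sq]; omega
  · rintro ⟨u, v⟩ h ⟨u', v'⟩ h' he
    rw [mem_S] at h h'
    obtain ⟨h1, h2, h3⟩ := h
    obtain ⟨h1', h2', h3'⟩ := h'
    simp only at h1 h2 h3 h1' h2' h3' he
    have h4 : 3 * u.natAbs ^ 2 + 2 * v.natAbs ^ 2 = 24 * n + 11 := by
      zify; rw [sq_abs, sq_abs]; exact h1
    have h4' : 3 * u'.natAbs ^ 2 + 2 * v'.natAbs ^ 2 = 24 * n + 11 := by
      zify; rw [sq_abs, sq_abs]; exact h1'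
    simp only [Prod.mk.injEq] at he
    have key : ∀ w y : ℕ, 3 * w ^ 2 + 2 * y ^ 2 = 24 * n + 11 → ¬ w % 3 = 0 →
        24 * ((w ^ 2 - 1) / 24) + 1 = w ^ 2 := by
      intro w y h hw
      have a1 := sq8 w
      have a2 := sq8 y
      have a3 := sq3 w
      omega
    have k1 := key _ _ h4 (by clear * - h3; omega)
    have k2 := key _ _ h4' (by clear * - h3'; omega)
    have e1 := nat_sq_inj u.natAbs u'.natAbs (by
      rw [← k1, ← k2, Nat.eq_of_mul_eq_mul_left three_pos he.1])
    rw [e1] at h4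
    have e2 := nat_sq_inj v.natAbs v'.natAbs (by clear * - h4 h4'; omega)
    have : u = u' := by clear * - e1 h3 h3'; omega
    have : v = v' := by clear * - e2 h2 h2'; omega
    subst u v
    rfl
  · rintro i j hij ⟨h2, w, hw⟩ ⟨x, hx⟩
    rw [← sq] at hw hx
    have a3 := sq3 w
    have a4 := sq3 x
    obtain ⟨u, hu, hu3⟩ : ∃ u : ℤ, u.natAbs = w ∧ 3 ∣ u - 1 := by
      rcases (show w % 3 = 1 ∨ w % 3 = 2 by omega) with h | h
      · exact ⟨w, by omega, by omega⟩
      · exact ⟨-w, by omega, by omega⟩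
    obtain ⟨v, hv, hv3⟩ : ∃ v : ℤ, v.natAbs = 2 * x ∧ 3 ∣ v - 1 := by
      rcases (show x % 3 = 1 ∨ x % 3 = 2 by omega) with h | h
      · exact ⟨-2 * x, by omega, by omega⟩
      · exact ⟨2 * x, by omega, by omega⟩
    refine ⟨(u, v), ?_, ?_⟩
    · rw [mem_S]
      refine ⟨?_, hv3, hu3⟩
      have : 3 * u.natAbs ^ 2 + 2 * v.natAbs ^ 2 = 24 * n + 11 := by
        rw [hu, hv, mul_pow]; omega
      zify at this
      rw [sq_abs, sq_abs] at this
      exact this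
    · simp only [hu, hv, Prod.mk.injEq, Nat.mul_div_cancel_left x two_pos]
      omega


lemma p_sq_mod (p : ℕ) (h2 : p % 2 = 1) (h3 : p % 3 ≠ 0) (m : ℕ) : p ^ (2 * m) % 24 = 1 := by
  have h : p ^ 2 % 24 = 1 := by
    have a1 := sq8 p
    have a2 := sq3 p
    omega
  rw [pow_mul, Nat.pow_mod, h]
  simp

theorem stmt_3 (p : ℕ) (hp : p.Prime) (hp5 : 5 ≤ p) (hp11 : p ≠ 11)
    (h : Even (b21 ((11 * p ^ 2 - 5) / 6)))
    (n k : ℕ) (hn : ¬ p ∣ (24 * n + 11)) :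
    b21 (4 * p ^ (6 * k + 2) * n + (11 * p ^ (6 * k + 2) - 5) / 6) % 2 = 0 := by
  have ndvd : ∀ r : ℕ, r.Prime → p ≠ r → ¬ p ∣ r := fun r hr hne hd =>
    hne ((Nat.prime_dvd_prime_iff_eq hp hr).1 hd)
  have h2 : p % 2 = 1 := by
    rcases hp.eq_two_or_odd with h | h
    · omega
    · exact h
  have h3 : p % 3 ≠ 0 := by
    intro h
    have := (Nat.prime_dvd_prime_iff_eq Nat.prime_three hp).1 (Nat.dvd_of_mod_eq_zero h)
    omega
  obtain ⟨q, hq, hq1⟩ : ∃ q : ℤ, q.natAbs = p ∧ 3 ∣ q - 1 := by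
    rcases (show p % 3 = 1 ∨ p % 3 = 2 by omega) with h | h
    · exact ⟨p, by omega, by omega⟩
    · exact ⟨-p, by omega, by omega⟩
  have hqp : Prime q := by
    rw [Int.prime_iff_natAbs_prime, hq]; exact hp
  have hdvd : ∀ r : ℕ, ¬ p ∣ r → ¬ q ∣ (r : ℤ) := by
    intro r hr hd
    apply hr
    rw [← hq]
    have := Int.natAbs_dvd_natAbs.2 hd
    simpa using this
  have hpow : ∀ m : ℕ, q ^ (2 * m) = ((p ^ (2 * m) : ℕ) : ℤ) := by
    intro m
    rw [← hq]
    push_cast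
    rw [pow_mul, pow_mul, sq_abs]
  have he : ((S 1 (q ^ 2 * 11)).card : ZMod 2) = 0 := by
    have hm := p_sq_mod p h2 h3 1
    have hpw := hpow 1
    rw [mul_one] at hm hpw
    obtain ⟨r, hr⟩ : ∃ r, p ^ 2 = 24 * r + 1 := ⟨p ^ 2 / 24, by omega⟩
    have e : (11 * p ^ 2 - 5) / 6 = 4 * (11 * r) + 1 := by omega
    rw [e, ← ZMod.natCast_eq_zero_iff_even, b21_S] at h
    rw [hpw, hr, ← h]
    congr 3
    push_cast
    ring
  have main := hecke_main q hqp hq1 (hdvd 2 (ndvd 2 Nat.prime_two (by omega)))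
    (hdvd 3 (ndvd 3 Nat.prime_three (by omega))) (hdvd 11 (ndvd 11 (by norm_num) hp11)) he
    ((24 * n + 11 : ℕ) : ℤ) (hdvd _ hn) (by omega) (by omega) k
  have hm := p_sq_mod p h2 h3 (3 * k + 1)
  have hpw := hpow (3 * k + 1)
  have ek : 2 * (3 * k + 1) = 6 * k + 2 := by ring
  rw [ek] at hm hpw
  obtain ⟨r, hr⟩ : ∃ r, p ^ (6 * k + 2) = 24 * r + 1 := ⟨p ^ (6 * k + 2) / 24, by omega⟩
  rw [hpw, hr] at main
  rw [hr]
  have e : 4 * (24 * r + 1) * n + (11 * (24 * r + 1) - 5) / 6 =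
      4 * ((24 * r + 1) * n + 11 * r) + 1 := by
    have : (11 * (24 * r + 1) - 5) / 6 = 44 * r + 1 := by omega
    rw [this]; ring
  rw [e, ← Nat.even_iff, ← ZMod.natCast_eq_zero_iff_even, b21_S, ← main]
  congr 3
  push_cast
  ring
end
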